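/- arXiv:1407.1914 — 2 statements merged into one kernel-verified Lean document; each statement's English description precedes it below -/
import Mathlib

section
/- Let K be a real number. If θ(x) < x for all x with e^{2.4} ≤ x ≤ K, then π(x) < li(x) for all x with e^{2.4} ≤ x ≤ K. -/
open Real Finset

/-- The Chebyshev function `θ(x) = ∑_{p ≤ x, p prime} log p`. -/
noncomputable def chebyshevTheta (x : ℝ) : ℝ :=
  ∑ p ∈ (Finset.range (⌊x⌋₊ + 1)).filter Nat.Prime, Real.log p

/-- The logarithmic integral `li(x) = ∫_2^x dt / log t`. -/
noncomputable def li (x : ℝ) : ℝ := ∫ t in (2 : ℝ)..x, 1 / Real.log t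

/-!
Integration by parts and partial summation give, with `θ` the Chebyshev function,
`li x - π(x) = (x - θ(x)) / log x - 2 / log 2 + ∫ t in 2..x, (t - θ(t)) / (t log² t)`.
As long as `θ(t) ≤ t`, the integral is nondecreasing, so that `π(x) < li x` persists once
`li a - π(a) - (a - θ(a)) / log a` is positive at some `a ≤ x`. This happens at `a = 64`. On
`[8, 64]` the inequality is checked directly: both sides are monotone, so finitely many lower bounds
on `li` suffice, and these come from the midpoint rule, which underestimates the integral of the
convex function `1 / log`.
-/

section MidpointRule

theorem convexOn_one_div_of_concaveOn {𝕜 E : Type*} [Field 𝕜] [LinearOrder 𝕜]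
    [IsStrictOrderedRing 𝕜] [AddCommMonoid E] [SMul 𝕜 E] {s : Set E} {f : E → 𝕜}
    (hf : ConcaveOn 𝕜 s f) (hpos : ∀ x ∈ s, 0 < f x) : ConvexOn 𝕜 s fun x ↦ 1 / f x := by
  refine ⟨hf.1, fun x hx y hy a b ha hb hab ↦ ?_⟩
  have inv_convex : 1 / (a • f x + b • f y) ≤ a • (1 / f x) + b • (1 / f y) := by
    simpa using (convexOn_zpow (𝕜 := 𝕜) (-1)).2 (hpos x hx) (hpos y hy) ha hb hab
  have mean_pos : 0 < a • f x + b • f y :=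
    convex_Ioi (0 : 𝕜) (hpos x hx) (hpos y hy) ha hb hab
  exact (one_div_le_one_div_of_le mean_pos (hf.2 hx hy ha hb hab)).trans inv_convex

theorem convexOn_one_div_log : ConvexOn ℝ (Set.Ioi 1) fun t ↦ 1 / log t :=
  convexOn_one_div_of_concaveOn
    (strictConcaveOn_log_Ioi.concaveOn.subset (Set.Ioi_subset_Ioi zero_le_one) (convex_Ioi 1))
    fun _ ↦ log_pos

theorem sub_mul_map_midpoint_le_integral {f : ℝ → ℝ} {a b : ℝ} (hab : a ≤ b)
    (hf : ConvexOn ℝ (Set.Icc a b) f) (hfi : IntervalIntegrable f MeasureTheory.volume a b) :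
    (b - a) * f ((a + b) / 2) ≤ ∫ t in a..b, f t := by
  have reflect_integrable :
      IntervalIntegrable (fun t ↦ f (a + b - t)) MeasureTheory.volume a b := by
    simpa using (hfi.comp_sub_left (a + b)).symm
  have midpoint_le : ∀ t ∈ Set.Icc a b, f ((a + b) / 2) ≤ (f t + f (a + b - t)) / 2 := by
    intro t ht
    have ht' : a + b - t ∈ Set.Icc a b := ⟨by linarith [ht.2], by linarith [ht.1]⟩
    have half_nonneg : (0 : ℝ) ≤ 1 / 2 := by norm_num
    have midpoint_eq : (a + b) / 2 = (1 / 2 : ℝ) • t + (1 / 2 : ℝ) • (a + b - t) := by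
      simp only [smul_eq_mul]
      ring
    calc f ((a + b) / 2) ≤ (1 / 2 : ℝ) • f t + (1 / 2 : ℝ) • f (a + b - t) := by
          rw [midpoint_eq]
          exact hf.2 ht ht' half_nonneg half_nonneg (add_halves 1)
      _ = (f t + f (a + b - t)) / 2 := by
          simp only [smul_eq_mul]
          ring
  calc (b - a) * f ((a + b) / 2) = ∫ _ in a..b, f ((a + b) / 2) := by simp
    _ ≤ ∫ t in a..b, (f t + f (a + b - t)) / 2 :=
      intervalIntegral.integral_mono_on hab (by simp)
        ((hfi.add reflect_integrable).div_const 2) midpoint_le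
    _ = ∫ t in a..b, f t := by
      rw [intervalIntegral.integral_div, intervalIntegral.integral_add hfi reflect_integrable,
        intervalIntegral.integral_comp_sub_left]
      simp

end MidpointRule

section LogarithmicIntegral

variable {a b x : ℝ}

theorem intervalIntegrable_one_div_log (ha : 1 < a) (hb : 1 < b) :
    IntervalIntegrable (fun t ↦ 1 / log t) MeasureTheory.volume a b := by
  refine ContinuousOn.intervalIntegrable fun t ht ↦ ContinuousAt.continuousWithinAt ?_
  have one_lt : 1 < t := (lt_min ha hb).trans_le ht.1
  have t_ne_zero : t ≠ 0 := by positivity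
  have log_ne_zero : log t ≠ 0 := (log_pos one_lt).ne'
  fun_prop (disch := assumption)

theorem li_two : li 2 = 0 := intervalIntegral.integral_same

theorem li_sub_li (ha : 1 < a) (hb : 1 < b) : li b - li a = ∫ t in a..b, 1 / log t :=
  intervalIntegral.integral_interval_sub_left
    (intervalIntegrable_one_div_log one_lt_two hb) (intervalIntegrable_one_div_log one_lt_two ha)

theorem monotoneOn_li : MonotoneOn li (Set.Ioi 1) := by
  intro a ha b hb hab
  rw [← sub_nonneg, li_sub_li ha hb]
  exact intervalIntegral.integral_nonneg hab fun t ht ↦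
    one_div_nonneg.2 (log_nonneg (ha.le.trans ht.1))

theorem sub_div_log_midpoint_le_li_sub_li (ha : 1 < a) (hab : a ≤ b) :
    (b - a) / log ((a + b) / 2) ≤ li b - li a := by
  have hb : 1 < b := ha.trans_le hab
  rw [li_sub_li ha hb, div_eq_mul_one_div]
  exact sub_mul_map_midpoint_le_integral hab
    (convexOn_one_div_log.subset (fun t ht ↦ ha.trans_le ht.1) (convex_Icc a b))
    (intervalIntegrable_one_div_log ha hb)

theorem hasDerivAt_div_log (hx : 1 < x) :
    HasDerivAt (fun t ↦ t / log t) (1 / log x - 1 / log x ^ 2) x := by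
  have x_ne_zero : x ≠ 0 := by positivity
  have log_ne_zero : log x ≠ 0 := (log_pos hx).ne'
  refine ((hasDerivAt_id x).div (hasDerivAt_log x_ne_zero) log_ne_zero).congr_deriv ?_
  simp only [id]
  field_simp

theorem li_eq_div_log_sub_add_integral (hx : 1 < x) :
    li x = x / log x - 2 / log 2 + ∫ t in 2..x, 1 / log t ^ 2 := by
  have hi := intervalIntegrable_one_div_log one_lt_two hx
  have hi' := Chebyshev.intervalIntegrable_one_div_log_sq one_lt_two hx
  rw [← intervalIntegral.integral_eq_sub_of_hasDerivAt
      (fun t ht ↦ hasDerivAt_div_log ((lt_min one_lt_two hx).trans_le ht.1)) (hi.sub hi'),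
    intervalIntegral.integral_sub hi hi', sub_add_cancel, li]

end LogarithmicIntegral

section PartialSummation

open Chebyshev

variable {a b x : ℝ}

theorem chebyshevTheta_eq_theta : chebyshevTheta = θ := by
  funext x
  rw [theta_eq_sum_Icc, chebyshevTheta, Nat.range_succ_eq_Icc_zero]

theorem intervalIntegrable_theta_div_mul_log_sq (ha : 2 ≤ a) (hb : 2 ≤ b) :
    IntervalIntegrable (fun t ↦ θ t / (t * log t ^ 2)) MeasureTheory.volume a b := by
  refine ((integrableOn_theta_div_id_mul_log_sq (max a b)).mono_set ?_).intervalIntegrable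
  exact Set.Icc_subset_Icc_left (le_min ha hb)

theorem sub_theta_div_mul_log_sq_eq (hx : x ≠ 0) :
    (x - θ x) / (x * log x ^ 2) = 1 / log x ^ 2 - θ x / (x * log x ^ 2) := by
  rw [sub_div, div_mul_cancel_left₀ hx, one_div]

theorem intervalIntegrable_sub_theta_div_mul_log_sq (ha : 2 ≤ a) (hb : 2 ≤ b) :
    IntervalIntegrable (fun t ↦ (t - θ t) / (t * log t ^ 2)) MeasureTheory.volume a b := by
  have hi := intervalIntegrable_one_div_log_sq (one_lt_two.trans_le ha) (one_lt_two.trans_le hb)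
  refine (hi.sub (intervalIntegrable_theta_div_mul_log_sq ha hb)).congr fun t ht ↦ ?_
  have t_pos : 0 < t := two_pos.trans ((le_min ha hb).trans_lt ht.1)
  exact (sub_theta_div_mul_log_sq_eq t_pos.ne').symm

theorem li_sub_primeCounting_eq (hx : 2 ≤ x) :
    li x - Nat.primeCounting ⌊x⌋₊ =
      (x - θ x) / log x - 2 / log 2 + ∫ t in 2..x, (t - θ t) / (t * log t ^ 2) := by
  have hx' : 1 < x := one_lt_two.trans_le hx
  have integral_eq : ∫ t in 2..x, (t - θ t) / (t * log t ^ 2) =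
      (∫ t in 2..x, 1 / log t ^ 2) - ∫ t in 2..x, θ t / (t * log t ^ 2) := by
    rw [← intervalIntegral.integral_sub (intervalIntegrable_one_div_log_sq one_lt_two hx')
      (intervalIntegrable_theta_div_mul_log_sq le_rfl hx)]
    refine intervalIntegral.integral_congr fun t ht ↦ ?_
    have t_pos : 0 < t := two_pos.trans_le ((le_min le_rfl hx).trans ht.1)
    exact sub_theta_div_mul_log_sq_eq t_pos.ne'
  rw [li_eq_div_log_sub_add_integral hx', primeCounting_eq_theta_div_log_add_integral hx,
    integral_eq]
  ring

theorem primeCounting_lt_li_of_theta_le (ha : 2 ≤ a) (hax : a ≤ x)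
    (hθ : ∀ t ∈ Set.Icc a x, θ t ≤ t)
    (h : Nat.primeCounting ⌊a⌋₊ + (a - θ a) / log a < li a) :
    Nat.primeCounting ⌊x⌋₊ < li x := by
  have hx : 2 ≤ x := ha.trans hax
  have integral_nonneg : 0 ≤ ∫ t in a..x, (t - θ t) / (t * log t ^ 2) :=
    intervalIntegral.integral_nonneg hax fun t ht ↦
      div_nonneg (sub_nonneg.2 (hθ t ht)) (by have := ha.trans ht.1; positivity)
  have boundary_nonneg : 0 ≤ (x - θ x) / log x :=
    div_nonneg (sub_nonneg.2 (hθ x ⟨hax, le_rfl⟩)) (log_nonneg (by linarith))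
  have integral_add := intervalIntegral.integral_add_adjacent_intervals
    (intervalIntegrable_sub_theta_div_mul_log_sq le_rfl ha)
    (intervalIntegrable_sub_theta_div_mul_log_sq ha hx)
  linarith [li_sub_primeCounting_eq ha, li_sub_primeCounting_eq hx]

end PartialSummation

section NumericalBounds

/-- As `2.7182818283 < exp 1`, the hypothesis `hpq` bounds `log ((a + b) / 2)` by `p / q`. -/
theorem le_li_of_le_li {a b r s : ℝ} (p q : ℕ) (hr : r ≤ li a)
    (hs : s ≤ r + (b - a) * q / p := by norm_num) (ha : 1 < a := by norm_num)
    (hab : a ≤ b := by norm_num)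
    (hpq : ((a + b) / 2) ^ q ≤ (2.7182818283 : ℝ) ^ p := by norm_num) : s ≤ li b := by
  have one_lt_mid : 1 < (a + b) / 2 := by linarith
  have log_mid_pos : 0 < log ((a + b) / 2) := log_pos one_lt_mid
  have mul_log_le : q * log ((a + b) / 2) ≤ p := by
    rw [← log_pow, log_le_iff_le_exp (by positivity), ← exp_one_pow]
    exact hpq.trans (pow_le_pow_left₀ (by norm_num) exp_one_gt_d9.le p)
  have inv_log_ge : (q : ℝ) / p ≤ 1 / log ((a + b) / 2) := by
    refine div_le_of_le_mul₀ (by positivity) (by positivity) ?_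
    rwa [one_div_mul_eq_div, le_div_iff₀ log_mid_pos]
  have midpoint : (b - a) * q / p ≤ li b - li a :=
    calc (b - a) * q / p = (b - a) * (q / p) := mul_div_assoc ..
      _ ≤ (b - a) * (1 / log ((a + b) / 2)) := by gcongr
      _ = (b - a) / log ((a + b) / 2) := mul_one_div ..
      _ ≤ li b - li a := sub_div_log_midpoint_le_li_sub_li ha hab
  linarith

theorem le_li_four : 1.818 ≤ li 4 := le_li_of_le_li 11 10 li_two.ge

theorem le_li_six : 3.059 ≤ li 6 := le_li_of_le_li 29 18 le_li_four

theorem le_li_eight : 4.086 ≤ li 8 := le_li_of_le_li 37 19 le_li_six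

theorem le_li_eleven : 5.415 ≤ li 11 := le_li_of_le_li 97 43 le_li_eight

theorem le_li_thirteen : 6.219 ≤ li 13 := le_li_of_le_li 87 35 le_li_eleven

theorem le_li_seventeen : 7.695 ≤ li 17 := le_li_of_le_li 65 24 le_li_thirteen

theorem le_li_nineteen : 8.386 ≤ li 19 := le_li_of_le_li 133 46 le_li_seventeen

theorem le_li_twentyThree : 9.698 ≤ li 23 := le_li_of_le_li 64 21 le_li_nineteen

theorem le_li_twentyNine : 11.538 ≤ li 29 := le_li_of_le_li 75 23 le_li_twentyThree

theorem le_li_thirtySeven : 13.823 ≤ li 37 := le_li_of_le_li 7 2 le_li_twentyNine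

theorem le_li_fortyThree : 15.448 ≤ li 43 := le_li_of_le_li 48 13 le_li_thirtySeven

theorem le_li_fiftyThree : 18.03 ≤ li 53 := le_li_of_le_li 151 39 le_li_fortyThree

theorem le_li_sixtyFour : 20.731 ≤ li 64 := le_li_of_le_li 57 14 le_li_fiftyThree

theorem primeCounting_lt_li_of_mem_Ico {a r x : ℝ} {b k : ℕ} (hr : r ≤ li a)
    (hx : x ∈ Set.Ico a b) (hk : Nat.primeCounting' b ≤ k) (hkr : k < r := by norm_num)
    (ha : 1 < a := by norm_num) : Nat.primeCounting ⌊x⌋₊ < li x := by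
  have floor_lt : ⌊x⌋₊ < b := (Nat.floor_lt (by linarith [hx.1])).2 hx.2
  calc (Nat.primeCounting ⌊x⌋₊ : ℝ) ≤ k := by
        exact_mod_cast (Nat.monotone_primeCounting' floor_lt).trans hk
    _ < r := hkr
    _ ≤ li a := hr
    _ ≤ li x := monotoneOn_li ha (ha.trans_le hx.1) hx.1

theorem primeCounting_lt_li_of_mem_Ico_eight_sixtyFour {x : ℝ} (hx : x ∈ Set.Ico 8 64) :
    Nat.primeCounting ⌊x⌋₊ < li x := by
  obtain ⟨h8, h64⟩ := hx
  rcases lt_or_ge x 11 with h11 | h11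
  · exact primeCounting_lt_li_of_mem_Ico le_li_eight ⟨h8, h11⟩ (k := 4) (by decide +kernel)
  rcases lt_or_ge x 13 with h13 | h13
  · exact primeCounting_lt_li_of_mem_Ico le_li_eleven ⟨h11, h13⟩ (k := 5) (by decide +kernel)
  rcases lt_or_ge x 17 with h17 | h17
  · exact primeCounting_lt_li_of_mem_Ico le_li_thirteen ⟨h13, h17⟩ (k := 6) (by decide +kernel)
  rcases lt_or_ge x 19 with h19 | h19
  · exact primeCounting_lt_li_of_mem_Ico le_li_seventeen ⟨h17, h19⟩ (k := 7) (by decide +kernel)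
  rcases lt_or_ge x 23 with h23 | h23
  · exact primeCounting_lt_li_of_mem_Ico le_li_nineteen ⟨h19, h23⟩ (k := 8) (by decide +kernel)
  rcases lt_or_ge x 29 with h29 | h29
  · exact primeCounting_lt_li_of_mem_Ico le_li_twentyThree ⟨h23, h29⟩ (k := 9) (by decide +kernel)
  rcases lt_or_ge x 37 with h37 | h37
  · exact primeCounting_lt_li_of_mem_Ico le_li_twentyNine ⟨h29, h37⟩ (k := 11) (by decide +kernel)
  rcases lt_or_ge x 43 with h43 | h43
  · exact primeCounting_lt_li_of_mem_Ico le_li_thirtySeven ⟨h37, h43⟩ (k := 13) (by decide +kernel)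
  rcases lt_or_ge x 53 with h53 | h53
  · exact primeCounting_lt_li_of_mem_Ico le_li_fortyThree ⟨h43, h53⟩ (k := 15) (by decide +kernel)
  exact primeCounting_lt_li_of_mem_Ico le_li_fiftyThree ⟨h53, h64⟩ (k := 18) (by decide +kernel)

theorem log_sixtyFour : log 64 = 6 * log 2 := by
  rw [show (64 : ℝ) = 2 ^ 6 by norm_num, log_pow, Nat.cast_ofNat]

theorem le_theta_sixtyFour : 75 * log 2 + log 3 ≤ Chebyshev.theta 64 := by
  have le_primorial : 2 ^ 75 * 3 ≤ primorial 64 := by decide +kernel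
  calc 75 * log 2 + log 3 = log (2 ^ 75 * 3) := by
        rw [log_mul (by positivity) (by positivity), log_pow, Nat.cast_ofNat]
    _ ≤ log (primorial 64) := log_le_log (by positivity) (by exact_mod_cast le_primorial)
    _ = Chebyshev.theta 64 := by rw [Chebyshev.theta_eq_log_primorial, Nat.floor_ofNat]

theorem primeCounting_add_sub_theta_div_log_lt_li_sixtyFour :
    Nat.primeCounting ⌊(64 : ℝ)⌋₊ + (64 - Chebyshev.theta 64) / log 64 < li 64 := by
  have primeCounting_eq : Nat.primeCounting ⌊(64 : ℝ)⌋₊ = 18 := by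
    rw [Nat.floor_ofNat]
    decide +kernel
  have log_two_gt := log_two_gt_d9
  have div_log_le : (64 - Chebyshev.theta 64) / log 64 ≤ 2.65 := by
    rw [log_sixtyFour, div_le_iff₀ (by positivity)]
    linarith [le_theta_sixtyFour, log_three_gt_d9]
  rw [primeCounting_eq]
  norm_num at div_log_le ⊢
  linarith [le_li_sixtyFour]

theorem exp_two_point_four_mem_Icc : exp 2.4 ∈ Set.Icc 8 64 := by
  have log_eight : log 8 = 3 * log 2 := by
    rw [show (8 : ℝ) = 2 ^ 3 by norm_num, log_pow, Nat.cast_ofNat]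
  constructor
  · rw [← log_le_iff_le_exp (by norm_num), log_eight]
    linarith [log_two_lt_d9]
  · rw [← le_log_iff_exp_le (by norm_num), log_sixtyFour]
    linarith [log_two_gt_d9]

end NumericalBounds

theorem pi_lt_li_of_theta_lt_general {x : ℝ} (hx : 8 ≤ x)
    (hθ : ∀ t, 64 ≤ t → t ≤ x → chebyshevTheta t ≤ t) : Nat.primeCounting ⌊x⌋₊ < li x := by
  rcases lt_or_ge x 64 with hx64 | hx64
  · exact primeCounting_lt_li_of_mem_Ico_eight_sixtyFour ⟨hx, hx64⟩
  · rw [chebyshevTheta_eq_theta] at hθ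
    exact primeCounting_lt_li_of_theta_le (by norm_num) hx64 (fun t ht ↦ hθ t ht.1 ht.2)
      primeCounting_add_sub_theta_div_log_lt_li_sixtyFour

theorem pi_lt_li_of_theta_lt (K : ℝ)
    (hθ : ∀ x : ℝ, Real.exp 2.4 ≤ x → x ≤ K → chebyshevTheta x < x) :
    ∀ x : ℝ, Real.exp 2.4 ≤ x → x ≤ K → (Nat.primeCounting ⌊x⌋₊ : ℝ) < li x :=
  fun _ hx hxK ↦ pi_lt_li_of_theta_lt_general (exp_two_point_four_mem_Icc.1.trans hx)
    fun t ht htx ↦ (hθ t (exp_two_point_four_mem_Icc.2.trans ht) (htx.trans hxK)).le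
end

section
/- For every real number x > 1, θ(x) − x > −θ(x^{1/2}) − lim_{T→∞} ∑_{ρ : |Im ρ| ≤ T} x^ρ/ρ − log(2π) − 3·x^{1/3}, where the limit is over the partial sums taken over the nontrivial zeros ρ of the Riemann zeta function with |Im ρ| ≤ T, counted with multiplicity (this limit exists and is real). -/
open Real Finset Filter

/-- `ρ` is a nontrivial zero of the Riemann zeta function. -/
def IsNontrivialZetaZero (ρ : ℂ) : Prop :=
  riemannZeta ρ = 0 ∧ 0 < ρ.re ∧ ρ.re < 1

open Classical in
/-- The multiplicity of `ρ` as a zero of the Riemann zeta function. -/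
noncomputable def zetaZeroMultiplicity (ρ : ℂ) : ℕ :=
  if h : AnalyticAt ℂ riemannZeta ρ then (analyticOrderAt riemannZeta ρ).toNat else 0

/-!
The function `(s - 1) * ζ(s)` is entire of order less than `2`, so Hadamard's product expresses
`-ζ'/ζ` as a sum of simple fractions over the zeros of `ζ`. Its truncated Perron integrals along
`Re s = 2` are computed in two ways: over the Dirichlet series, where they converge to the
normalized Chebyshev function `ψ₀(x) ≤ ψ(x)`, and zero by zero. Nontrivial zeros far from the height
`T` of truncation contribute a residue and a small error; those near `T` are few, by Jensen's
formula. Since the trivial zeros contribute a nonpositive amount, this yields the lower bound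
`x - log (2π) - ψ(x)` for the sum over the nontrivial zeros.

It remains to see that `ψ(x) - θ(x) - θ(√x) < 3 * y` for `y = x ^ (1 / 3)`. Only primes `p ≤ y`
make a positive contribution to the left side, each at most
`log x - 2 * log p = log p + 3 * log (y / p)`. The first terms add up to `θ(y) ≤ y * log 4`. For the
second, `p ↦ (p - 1) / 2` maps the primes injectively to the indices of the odd numbers, and the sum
of `log (y / m)` over odd `m ≤ y` is at most `y / 2` by Stirling's formula.
-/

namespace ExplicitFormula

open Complex (I)
open MeasureTheory Topology
open ArithmeticFunction (vonMangoldt)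

/-! ### Entire functions of finite order -/

section Factorization

variable {F : ℂ → ℂ}

lemma exists_eq_pow_mul_of_analyticOrderAt_eq (hF : Differentiable ℂ F) {a : ℂ} {n : ℕ}
    (hn : analyticOrderAt F a = n) :
    ∃ g : ℂ → ℂ, Differentiable ℂ g ∧ g a ≠ 0 ∧ ∀ z, F z = (z - a) ^ n * g z := by
  obtain ⟨g₀, hg₀, hg₀a, hFg₀⟩ := (hF.analyticAt a).analyticOrderAt_eq_natCast.1 hn
  have hlocal : (fun z ↦ F z / (z - a) ^ n) =ᶠ[𝓝[≠] a] g₀ := by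
    filter_upwards [hFg₀.filter_mono nhdsWithin_le_nhds, self_mem_nhdsWithin] with z hz hza
    rw [hz, smul_eq_mul, mul_div_cancel_left₀ _ (pow_ne_zero _ (sub_ne_zero.2 hza))]
  refine ⟨Function.update (fun z ↦ F z / (z - a) ^ n) a (g₀ a), fun z ↦ ?_, by simpa using hg₀a,
    fun z ↦ ?_⟩
  · rcases eq_or_ne z a with rfl | hza
    · refine hg₀.differentiableAt.congr_of_eventuallyEq ?_
      rw [← Function.update_eq_self z g₀]
      filter_upwards [eventually_nhdsWithin_iff.1 hlocal] with w hw
      rcases eq_or_ne w z with rfl | hwz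
      · simp
      · simpa [hwz] using hw hwz
    · have hquot : DifferentiableAt ℂ (fun w ↦ F w / (w - a) ^ n) z :=
        (hF z).fun_div (by fun_prop) (pow_ne_zero n (sub_ne_zero.2 hza))
      refine hquot.congr_of_eventuallyEq ?_
      filter_upwards [isOpen_ne.mem_nhds hza] with w hw using Function.update_of_ne hw _ _
  · rcases eq_or_ne z a with rfl | hza
    · simpa using hFg₀.self_of_nhds
    · rw [Function.update_of_ne hza, mul_div_cancel₀ _ (pow_ne_zero n (sub_ne_zero.2 hza))]

lemma analyticOrderAt_ne_top_of_apply_ne_zero (hF : Differentiable ℂ F) {c : ℂ} (hc : F c ≠ 0)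
    (a : ℂ) : analyticOrderAt F a ≠ ⊤ := by
  rw [Ne, AnalyticOnNhd.analyticOrderAt_eq_top_iff_eq_zero a hF.analyticAt]
  rintro rfl
  exact hc rfl

lemma exists_eq_prod_pow_mul (hF : Differentiable ℂ F) {c : ℂ} (hc : F c ≠ 0) (S : Finset ℂ) :
    ∃ g : ℂ → ℂ, Differentiable ℂ g ∧ (∀ ρ ∈ S, g ρ ≠ 0) ∧
      ∀ z, F z = (∏ ρ ∈ S, (z - ρ) ^ analyticOrderNatAt F ρ) * g z := by
  classical
  induction S using Finset.induction_on with
  | empty => exact ⟨F, hF, by simp, by simp⟩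
  | insert a S haS ih =>
    obtain ⟨g, hg, hgS, hFg⟩ := ih
    set P : ℂ → ℂ := fun z ↦ ∏ ρ ∈ S, (z - ρ) ^ analyticOrderNatAt F ρ
    have hP : Differentiable ℂ P := by fun_prop
    have hPa : P a ≠ 0 := Finset.prod_ne_zero_iff.2 fun ρ hρ ↦
      pow_ne_zero _ (sub_ne_zero.2 fun h ↦ haS (h ▸ hρ))
    have horder : analyticOrderAt F a = analyticOrderAt g a := by
      rw [show F = P * g from funext hFg, analyticOrderAt_mul (hP.analyticAt a) (hg.analyticAt a),
        (hP.analyticAt a).analyticOrderAt_eq_zero.2 hPa, zero_add]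
    have hgorder : analyticOrderAt g a = analyticOrderNatAt F a :=
      horder ▸ (ENat.natCast_toNat (analyticOrderAt_ne_top_of_apply_ne_zero hF hc a)).symm
    obtain ⟨k, hk, hka, hgk⟩ := exists_eq_pow_mul_of_analyticOrderAt_eq hg hgorder
    refine ⟨k, hk, fun ρ hρ hkρ ↦ ?_, fun z ↦ ?_⟩
    · rcases Finset.mem_insert.1 hρ with rfl | hρS
      · exact hka hkρ
      · exact hgS ρ hρS (by rw [hgk, hkρ, mul_zero])
    · rw [Finset.prod_insert haS, hFg z, hgk z]
      ring

lemma logDeriv_prod_pow_mul {S : Finset ℂ} {m : ℂ → ℕ} {g : ℂ → ℂ} {z : ℂ}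
    (hg : DifferentiableAt ℂ g z) (hz : (∏ ρ ∈ S, (z - ρ) ^ m ρ) * g z ≠ 0) :
    logDeriv (fun w ↦ (∏ ρ ∈ S, (w - ρ) ^ m ρ) * g w) z =
      ∑ ρ ∈ S, (m ρ : ℂ) * (1 / (z - ρ)) + logDeriv g z := by
  have hprod := left_ne_zero_of_mul hz
  rw [logDeriv_mul z hprod (right_ne_zero_of_mul hz) (by fun_prop) hg,
    logDeriv_prod (Finset.prod_ne_zero_iff.1 hprod) fun ρ _ ↦ by fun_prop]
  congr 1
  refine Finset.sum_congr rfl fun ρ _ ↦ ?_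
  rw [logDeriv_fun_pow (by fun_prop), logDeriv_apply, deriv_sub_const_fun, deriv_id'']

lemma sum_analyticOrderNatAt_le (hF : Differentiable ℂ F) {c : ℂ} (hc : F c ≠ 0) {r R M : ℝ}
    (hr : 0 < r) (hrR : r < R) (hM : 1 ≤ M) (hFM : ∀ z ∈ Metric.sphere c R, ‖F z‖ ≤ M)
    {S : Finset ℂ} (hS : ∀ ρ ∈ S, ‖ρ - c‖ ≤ r) :
    (∑ ρ ∈ S, analyticOrderNatAt F ρ : ℝ) ≤ Real.log (M / ‖F c‖) / Real.log (R / r) := by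
  have hR : 0 < R := hr.trans hrR
  have han (s : Set ℂ) : AnalyticOnNhd ℂ F s := fun z _ ↦ hF.analyticAt z
  set D := MeromorphicOn.divisor F (Metric.closedBall c |r|)
  have hDS : ∀ ρ ∈ S, (analyticOrderNatAt F ρ : ℤ) = D ρ := fun ρ hρ ↦ by
    have hρr : ρ ∈ Metric.closedBall c |r| := by
      simpa [dist_eq_norm, abs_of_pos hr] using hS ρ hρ
    rw [MeromorphicOn.AnalyticOnNhd.divisor_apply (han _) hρr, ← Nat.cast_analyticOrderNatAt
      (analyticOrderAt_ne_top_of_apply_ne_zero hF hc ρ), ENat.map_natCast, WithTop.untop₀_coe]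
  have hfin : D.support.Finite := D.finiteSupport (isCompact_closedBall c |r|)
  have hsum : ∑ ρ ∈ S, (analyticOrderNatAt F ρ : ℤ) ≤ ∑ᶠ ρ, D ρ := by
    classical
    rw [Finset.sum_congr rfl hDS, finsum_eq_sum_of_support_subset (s := S ∪ hfin.toFinset) _
      fun ρ hρ ↦ by simp_all]
    exact Finset.sum_le_sum_of_subset_of_nonneg Finset.subset_union_left
      fun ρ _ _ ↦ MeromorphicOn.AnalyticOnNhd.divisor_nonneg (han _) ρ
  refine le_trans (by exact_mod_cast hsum) (AnalyticOnNhd.sum_divisor_le (by rwa [abs_of_pos hr])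
    (by rwa [abs_of_pos hr, abs_of_pos hR]) hM (han _) hc (by rwa [abs_of_pos hR]))

end Factorization

section BorelCaratheodory

variable {h G : ℂ → ℂ} {R A : ℝ}

lemma norm_deriv_le_of_re_le (hR : 0 < R) (hA : 0 < A)
    (hd : DifferentiableOn ℂ h (Metric.ball 0 R)) (h0 : h 0 = 0)
    (hre : Set.MapsTo h (Metric.ball 0 R) {w | w.re ≤ A}) {z : ℂ} (hz : ‖z‖ ≤ R / 4) :
    ‖deriv h z‖ ≤ 8 * A / R := by
  have hnorm {w : ℂ} (hw : w ∈ Metric.closedBall z (R / 4)) : ‖w‖ ≤ R / 2 := by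
    have := norm_le_norm_add_norm_sub' w z
    rw [mem_closedBall_iff_norm] at hw
    linarith
  have hsub : Metric.closedBall z (R / 4) ⊆ Metric.ball 0 R := fun w hw ↦ by
    rw [mem_ball_zero_iff]
    linarith [hnorm hw]
  have hbound : ∀ w ∈ Metric.sphere z (R / 4), ‖h w‖ ≤ 2 * A := fun w hw ↦ by
    have hw' := hnorm (Metric.sphere_subset_closedBall hw)
    refine (Complex.borelCaratheodory_zero hA hd hre hR
      (hsub (Metric.sphere_subset_closedBall hw)) h0).trans ?_
    rw [div_le_iff₀ (by linarith)]
    nlinarith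
  refine (Complex.norm_deriv_le_of_forall_mem_sphere_norm_le (by positivity)
    (hd.diffContOnCl_ball hsub) hbound).trans_eq ?_
  field_simp
  norm_num

/-- Borel–Carathéodory and Cauchy bound `h'`, and the Schwarz lemma turns the bound into a
Lipschitz estimate. -/
lemma norm_deriv_sub_deriv_zero_le_of_re_le (hR : 0 < R) (hA : 0 < A)
    (hd : DifferentiableOn ℂ h (Metric.ball 0 R)) (h0 : h 0 = 0)
    (hre : Set.MapsTo h (Metric.ball 0 R) {w | w.re ≤ A}) {s : ℂ} (hs : ‖s‖ < R / 4) :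
    ‖deriv h s - deriv h 0‖ ≤ 64 * A / R ^ 2 * ‖s‖ := by
  have hd' : DifferentiableOn ℂ (deriv h) (Metric.ball 0 (R / 4)) :=
    (hd.deriv Metric.isOpen_ball).mono (Metric.ball_subset_ball (by linarith))
  have hmaps : Set.MapsTo (deriv h) (Metric.ball 0 (R / 4))
      (Metric.closedBall (deriv h 0) (16 * A / R)) := fun z hz ↦ by
    rw [mem_closedBall_iff_norm]
    have hz' := norm_deriv_le_of_re_le hR hA hd h0 hre (mem_ball_zero_iff.1 hz).le
    have h0' := norm_deriv_le_of_re_le hR hA hd h0 hre (z := 0) (by rw [norm_zero]; positivity)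
    calc ‖deriv h z - deriv h 0‖ ≤ ‖deriv h z‖ + ‖deriv h 0‖ := norm_sub_le _ _
      _ ≤ 8 * A / R + 8 * A / R := add_le_add hz' h0'
      _ = 16 * A / R := by ring
  have hschwarz := Complex.dist_le_div_mul_dist_of_mapsTo_ball hd' hmaps (mem_ball_zero_iff.2 hs)
  rw [dist_eq_norm, dist_eq_norm, sub_zero] at hschwarz
  refine hschwarz.trans_eq ?_
  field_simp
  ring

lemma exists_log_on_ball (hG : Differentiable ℂ G) (hR : 0 < R)
    (hne : ∀ z ∈ Metric.ball (0 : ℂ) R, G z ≠ 0) :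
    ∃ h : ℂ → ℂ, h 0 = 0 ∧ (∀ z ∈ Metric.ball (0 : ℂ) R, HasDerivAt h (logDeriv G z) z) ∧
      ∀ z ∈ Metric.ball (0 : ℂ) R, G z = G 0 * Complex.exp (h z) := by
  have hlogd : DifferentiableOn ℂ (logDeriv G) (Metric.ball 0 R) := fun z hz ↦
    ((hG.analyticAt z).deriv.differentiableAt.div (hG z) (hne z hz)).differentiableWithinAt
  obtain ⟨h₀, hh₀⟩ := hlogd.isExactOn_ball
  set h : ℂ → ℂ := fun z ↦ h₀ z - h₀ 0
  have hh : ∀ z ∈ Metric.ball (0 : ℂ) R, HasDerivAt h (logDeriv G z) z :=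
    fun z hz ↦ (hh₀ z hz).sub_const _
  obtain ⟨k, -, hk⟩ := (logDeriv_eqOn_iff (f := G) (g := fun z ↦ Complex.exp (h z))
    hG.differentiableOn (fun z hz ↦ (hh z hz).cexp.differentiableAt.differentiableWithinAt)
    Metric.isOpen_ball (convex_ball 0 R).isPreconnected
    (fun _ _ ↦ Complex.exp_ne_zero _) hne).1 fun z hz ↦ by
      rw [logDeriv_apply (fun z ↦ Complex.exp (h z)), (hh z hz).cexp.deriv,
        mul_div_cancel_left₀ _ (Complex.exp_ne_zero _)]
  have hk0 : G 0 = k := by simpa [h] using hk (Metric.mem_ball_self hR)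
  exact ⟨h, sub_self _, hh, fun z hz ↦ hk0 ▸ hk hz⟩

lemma norm_logDeriv_sub_logDeriv_zero_le (hG : Differentiable ℂ G) (hR : 0 < R) (hA : 0 < A)
    (hne : ∀ z ∈ Metric.ball (0 : ℂ) R, G z ≠ 0)
    (hbound : ∀ z ∈ Metric.ball (0 : ℂ) R, ‖G z‖ ≤ ‖G 0‖ * Real.exp A)
    {s : ℂ} (hs : ‖s‖ < R / 4) :
    ‖logDeriv G s - logDeriv G 0‖ ≤ 64 * A / R ^ 2 * ‖s‖ := by
  obtain ⟨h, h0, hderiv, hexp⟩ := exists_log_on_ball hG hR hne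
  have hzero : (0 : ℂ) ∈ Metric.ball (0 : ℂ) R := Metric.mem_ball_self hR
  have hsR : s ∈ Metric.ball (0 : ℂ) R := mem_ball_zero_iff.2 (by linarith)
  have hre : Set.MapsTo h (Metric.ball 0 R) {w | w.re ≤ A} := fun z hz ↦ by
    have := hbound z hz
    rw [hexp z hz, norm_mul, Complex.norm_exp] at this
    exact Real.exp_le_exp.1 (le_of_mul_le_mul_left this (norm_pos_iff.2 (hne 0 hzero)))
  rw [← (hderiv s hsR).deriv, ← (hderiv 0 hzero).deriv]
  exact norm_deriv_sub_deriv_zero_le_of_re_le hR hA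
    (fun z hz ↦ (hderiv z hz).differentiableAt.differentiableWithinAt) h0 hre hs

end BorelCaratheodory

section Hadamard

variable {F : ℂ → ℂ}

/-- The quotient is bounded on the sphere of radius `2 * R`, where every `|z - ρ|` exceeds `|ρ|`,
and the maximum principle carries the bound inside. -/
lemma norm_le_of_eq_prod_pow_mul {S : Finset ℂ} {m : ℂ → ℕ} {g : ℂ → ℂ} {R A : ℝ} (hR : 0 < R)
    (hg : Differentiable ℂ g) (hFg : ∀ z, F z = (∏ ρ ∈ S, (z - ρ) ^ m ρ) * g z) (h0 : F 0 ≠ 0)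
    (hS : ∀ ρ ∈ S, ‖ρ‖ ≤ R) (hbound : ∀ z : ℂ, ‖z‖ = 2 * R → ‖F z‖ ≤ ‖F 0‖ * Real.exp A)
    {z : ℂ} (hz : z ∈ Metric.ball (0 : ℂ) R) : ‖g z‖ ≤ ‖g 0‖ * Real.exp A := by
  set P : ℂ → ℂ := fun z ↦ ∏ ρ ∈ S, (z - ρ) ^ m ρ
  have hP0 : 0 < ‖P 0‖ := norm_pos_iff.2 fun h ↦ h0 ((hFg 0).trans (by
    change P 0 * g 0 = 0
    rw [h, zero_mul]))
  have hsphere : ∀ w ∈ frontier (Metric.ball (0 : ℂ) (2 * R)), ‖g w‖ ≤ ‖g 0‖ * Real.exp A := by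
    rw [frontier_ball _ (by positivity)]
    intro w hw
    have hw : ‖w‖ = 2 * R := by simpa using hw
    have hP : ‖P 0‖ ≤ ‖P w‖ := by
      simp only [P, norm_prod, norm_pow]
      refine Finset.prod_le_prod (fun _ _ ↦ by positivity) fun ρ hρ ↦
        pow_le_pow_left₀ (norm_nonneg _) ?_ _
      rw [zero_sub, norm_neg]
      linarith [hS ρ hρ, norm_sub_norm_le w ρ]
    refine le_of_mul_le_mul_left ?_ hP0
    calc ‖P 0‖ * ‖g w‖ ≤ ‖P w‖ * ‖g w‖ := by gcongr
      _ = ‖F w‖ := by rw [hFg w, norm_mul]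
      _ ≤ ‖F 0‖ * Real.exp A := hbound w hw
      _ = ‖P 0‖ * (‖g 0‖ * Real.exp A) := by rw [hFg 0, norm_mul, mul_assoc]
  exact Complex.norm_le_of_forall_mem_frontier_norm_le Metric.isBounded_ball hg.diffContOnCl
    hsphere (subset_closure (Metric.ball_subset_ball (by linarith) hz))

lemma norm_logDeriv_sub_sum_zeros_le (hF : Differentiable ℂ F) (h0 : F 0 ≠ 0) {R A : ℝ}
    (hR : 0 < R) (hA : 0 < A) (hbound : ∀ z : ℂ, ‖z‖ = 2 * R → ‖F z‖ ≤ ‖F 0‖ * Real.exp A)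
    {S : Finset ℂ} (hS : ∀ ρ, ρ ∈ S ↔ F ρ = 0 ∧ ‖ρ‖ ≤ R) {s : ℂ} (hs : F s ≠ 0)
    (hsR : ‖s‖ < R / 4) :
    ‖logDeriv F s - logDeriv F 0 -
      ∑ ρ ∈ S, (analyticOrderNatAt F ρ : ℂ) * (1 / (s - ρ) + 1 / ρ)‖ ≤ 64 * A / R ^ 2 * ‖s‖ := by
  obtain ⟨g, hg, hgS, hFg⟩ := exists_eq_prod_pow_mul hF h0 S
  have hlogDeriv {z : ℂ} (hz : F z ≠ 0) : logDeriv F z =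
      ∑ ρ ∈ S, (analyticOrderNatAt F ρ : ℂ) * (1 / (z - ρ)) + logDeriv g z := by
    conv_lhs => rw [show F = _ from funext hFg]
    exact logDeriv_prod_pow_mul (hg z) (hFg z ▸ hz)
  have hgne : ∀ z ∈ Metric.ball (0 : ℂ) R, g z ≠ 0 := fun z hz hgz ↦
    hgS z ((hS z).2 ⟨by rw [hFg, hgz, mul_zero], (mem_ball_zero_iff.1 hz).le⟩) hgz
  refine le_of_eq_of_le ?_ (norm_logDeriv_sub_logDeriv_zero_le hg hR hA hgne
    (fun z ↦ norm_le_of_eq_prod_pow_mul hR hg hFg h0 (fun ρ hρ ↦ ((hS ρ).1 hρ).2) hbound) hsR)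
  congr 1
  rw [hlogDeriv hs, hlogDeriv h0]
  simp only [mul_add, Finset.sum_add_distrib, zero_sub, one_div, inv_neg, mul_neg,
    Finset.sum_neg_distrib]
  ring

/-- The logarithmic derivative of Hadamard's product for entire functions of order less
than `2`. -/
theorem tendsto_sum_zeros_logDeriv (hF : Differentiable ℂ F) (h0 : F 0 ≠ 0) {C p : ℝ} (hC : 0 < C)
    (hp : p < 2) (hbound : ∀ z : ℂ, 1 ≤ ‖z‖ → ‖F z‖ ≤ Real.exp (C * ‖z‖ ^ p)) {S : ℕ → Finset ℂ}
    (hS : ∀ n ρ, ρ ∈ S n ↔ F ρ = 0 ∧ ‖ρ‖ ≤ n) {s : ℂ} (hs : F s ≠ 0) :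
    Tendsto (fun n ↦ ∑ ρ ∈ S n, (analyticOrderNatAt F ρ : ℂ) * (1 / (s - ρ) + 1 / ρ)) atTop
      (𝓝 (logDeriv F s - logDeriv F 0)) := by
  set D : ℝ := |Real.log ‖F 0‖| + 1
  have herror : ∀ᶠ n : ℕ in atTop, ‖∑ ρ ∈ S n, (analyticOrderNatAt F ρ : ℂ) *
      (1 / (s - ρ) + 1 / ρ) - (logDeriv F s - logDeriv F 0)‖ ≤
      64 * (C * (2 * n : ℝ) ^ p + D) / (n : ℝ) ^ 2 * ‖s‖ := by
    filter_upwards [eventually_ge_atTop 1, tendsto_natCast_atTop_atTop.eventually_gt_atTop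
      (4 * ‖s‖)] with n hn hns
    have hn1 : (1 : ℝ) ≤ n := by exact_mod_cast hn
    rw [norm_sub_rev]
    refine norm_logDeriv_sub_sum_zeros_le hF h0 (by linarith) (by positivity) (fun z hz ↦ ?_)
      (hS n) hs (by linarith)
    refine (hbound z (by linarith)).trans ?_
    rw [← Real.exp_log (norm_pos_iff.2 h0), ← Real.exp_add, Real.exp_le_exp, hz]
    linarith [neg_abs_le (Real.log ‖F 0‖)]
  have hpow {q : ℝ} (hq : q < 2) : Tendsto (fun n : ℕ ↦ (n : ℝ) ^ (q - 2)) atTop (𝓝 0) := by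
    simpa [Function.comp_def] using
      (tendsto_rpow_neg_atTop (sub_pos.2 hq)).comp tendsto_natCast_atTop_atTop
  have hlim : Tendsto (fun n : ℕ ↦ 64 * (C * (2 * n : ℝ) ^ p + D) / (n : ℝ) ^ 2 * ‖s‖)
      atTop (𝓝 0) := by
    have h := ((hpow hp).const_mul (64 * C * 2 ^ p * ‖s‖)).add
      ((hpow two_pos).const_mul (64 * D * ‖s‖))
    simp only [mul_zero, add_zero] at h
    refine h.congr' ?_
    filter_upwards [eventually_ge_atTop 1] with n hn
    have hn0 : (0 : ℝ) < n := by exact_mod_cast hn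
    rw [Real.rpow_sub hn0, Real.rpow_sub hn0, Real.rpow_two, Real.rpow_zero,
      Real.mul_rpow two_pos.le hn0.le]
    ring
  rw [tendsto_iff_norm_sub_tendsto_zero]
  exact squeeze_zero' (Eventually.of_forall fun _ ↦ norm_nonneg _) herror hlim

end Hadamard

/-! ### Rectangle integrals and the discontinuous factor -/

section Perron

/-- The integral of `f` along the positively oriented boundary of `[p, q] × [u, v]`. -/
noncomputable def rectIntegral (f : ℂ → ℂ) (p q u v : ℝ) : ℂ :=
  (∫ x : ℝ in p..q, f (x + u * I)) - (∫ x : ℝ in p..q, f (x + v * I)) +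
    I * (∫ y : ℝ in u..v, f (q + y * I)) - I * (∫ y : ℝ in u..v, f (p + y * I))

variable {p q u v : ℝ}

lemma rectIntegral_eq_zero {f : ℂ → ℂ}
    (hf : DifferentiableOn ℂ f (Set.uIcc p q ×ℂ Set.uIcc u v)) : rectIntegral f p q u v = 0 := by
  simpa [rectIntegral] using
    Complex.integral_boundary_rect_eq_zero_of_differentiableOn f ⟨p, u⟩ ⟨q, v⟩ hf

lemma mul_integral_inv_eq_log_sub_log {a b : ℂ} (h : ∀ t : ℝ, a + t * b ∈ Complex.slitPlane) :
    b * ∫ t in u..v, (a + t * b)⁻¹ = Complex.log (a + v * b) - Complex.log (a + u * b) := by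
  rw [← intervalIntegral.integral_const_mul]
  refine intervalIntegral.integral_eq_sub_of_hasDerivAt
    (f := fun t : ℝ ↦ Complex.log (a + t * b)) (fun t _ ↦ ?_) ?_
  · have hline : HasDerivAt (fun t : ℝ ↦ a + t * b) (1 * b) t :=
      (Complex.ofRealCLM.hasDerivAt.mul_const b).const_add a
    simpa [div_eq_mul_inv] using hline.clog_real (h t)
  · exact (continuous_const.mul (Continuous.inv₀ (by fun_prop)
      fun t ↦ Complex.slitPlane_ne_zero (h t))).intervalIntegrable _ _

lemma log_sub_log_neg_of_im_pos {z : ℂ} (hz : 0 < z.im) :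
    Complex.log z - Complex.log (-z) = π * I := by
  rw [Complex.log, Complex.log, norm_neg, Complex.arg_neg_eq_arg_sub_pi_of_im_pos hz]
  push_cast
  ring

lemma rectIntegral_inv (hp : p < 0) (hq : 0 < q) (hu : u < 0) (hv : 0 < v) :
    rectIntegral (fun w ↦ w⁻¹) p q u v = 2 * π * I := by
  have horizontal {c : ℝ} (hc : c ≠ 0) : ∫ x : ℝ in p..q, ((x : ℂ) + c * I)⁻¹ =
      Complex.log (q + c * I) - Complex.log (p + c * I) := by
    simpa [add_comm] using mul_integral_inv_eq_log_sub_log (u := p) (v := q) (a := c * I) (b := 1)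
      fun t ↦ Or.inr (by simpa using hc)
  have right : I * ∫ y : ℝ in u..v, ((q : ℂ) + y * I)⁻¹ =
      Complex.log (q + v * I) - Complex.log (q + u * I) :=
    mul_integral_inv_eq_log_sub_log fun t ↦ Or.inl (by simpa using hq)
  have left : I * ∫ y : ℝ in u..v, ((p : ℂ) + y * I)⁻¹ =
      Complex.log (-(p + v * I)) - Complex.log (-(p + u * I)) := by
    have h := mul_integral_inv_eq_log_sub_log (u := u) (v := v) (a := -p) (b := -I)
      fun t ↦ Or.inl (by simpa using hp)
    simpa only [mul_neg, ← neg_add, inv_neg, intervalIntegral.integral_neg, neg_mul, neg_neg]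
      using h
  have above := log_sub_log_neg_of_im_pos (z := p + v * I) (by simpa using hv)
  have below := log_sub_log_neg_of_im_pos (z := -(p + u * I)) (by simpa using hu)
  rw [neg_neg] at below
  rw [rectIntegral, horizontal hu.ne, horizontal hv.ne', right, left]
  linear_combination above + below

lemma rectIntegral_add {f g : ℂ → ℂ} (hp : p ≠ 0) (hq : q ≠ 0) (hu : u ≠ 0) (hv : v ≠ 0)
    (hf : ContinuousOn f {0}ᶜ) (hg : ContinuousOn g {0}ᶜ) :
    rectIntegral (fun w ↦ f w + g w) p q u v = rectIntegral f p q u v + rectIntegral g p q u v := by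
  have horizontal {h : ℂ → ℂ} (hh : ContinuousOn h {0}ᶜ) {c : ℝ} (hc : c ≠ 0) :
      IntervalIntegrable (fun x : ℝ ↦ h (x + c * I)) volume p q :=
    (hh.comp_continuous (by fun_prop) fun x h0 ↦ hc (by
      simpa using congrArg Complex.im h0)).intervalIntegrable _ _
  have vertical {h : ℂ → ℂ} (hh : ContinuousOn h {0}ᶜ) {c : ℝ} (hc : c ≠ 0) :
      IntervalIntegrable (fun y : ℝ ↦ h (c + y * I)) volume u v :=
    (hh.comp_continuous (by fun_prop) fun y h0 ↦ hc (by
      simpa using congrArg Complex.re h0)).intervalIntegrable _ _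
  simp only [rectIntegral]
  rw [intervalIntegral.integral_add (horizontal hf hu) (horizontal hg hu),
    intervalIntegral.integral_add (horizontal hf hv) (horizontal hg hv),
    intervalIntegral.integral_add (vertical hf hp) (vertical hg hp),
    intervalIntegral.integral_add (vertical hf hq) (vertical hg hq)]
  ring

lemma rectIntegral_congr {f g : ℂ → ℂ} (hp : p ≠ 0) (hq : q ≠ 0) (hu : u ≠ 0) (hv : v ≠ 0)
    (hfg : ∀ w ≠ 0, f w = g w) : rectIntegral f p q u v = rectIntegral g p q u v := by
  have horizontal {c : ℝ} (hc : c ≠ 0) (x : ℝ) : f (x + c * I) = g (x + c * I) :=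
    hfg _ fun h ↦ hc (by simpa using congrArg Complex.im h)
  have vertical {c : ℝ} (hc : c ≠ 0) (y : ℝ) : f (c + y * I) = g (c + y * I) :=
    hfg _ fun h ↦ hc (by simpa using congrArg Complex.re h)
  simp only [rectIntegral, horizontal hu, horizontal hv, vertical hp, vertical hq]

lemma rectIntegral_exp_div (l : ℝ) (hp : p < 0) (hq : 0 < q) (hu : u < 0) (hv : 0 < v) :
    rectIntegral (fun w ↦ Complex.exp (l * w) / w) p q u v = 2 * π * I := by
  set E : ℂ → ℂ := fun w ↦ Complex.exp (l * w)
  have hd : Differentiable ℂ (dslope E 0) := differentiableOn_univ.1 <|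
    (Complex.differentiableOn_dslope Filter.univ_mem).2 (by fun_prop)
  have hsplit : ∀ w ≠ 0, E w / w = dslope E 0 w + w⁻¹ := fun w hw ↦ by
    rw [dslope_of_ne _ hw, slope_def_field]
    simp only [E, mul_zero, Complex.exp_zero, sub_zero]
    ring
  rw [rectIntegral_congr hp.ne hq.ne' hu.ne hv.ne' hsplit,
    rectIntegral_add hp.ne hq.ne' hu.ne hv.ne' hd.continuous.continuousOn continuousOn_inv₀,
    rectIntegral_eq_zero hd.differentiableOn, rectIntegral_inv hp hq hu hv, zero_add]

lemma differentiableOn_exp_div (l : ℝ) {s : Set ℂ} (hs : (0 : ℂ) ∉ s) :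
    DifferentiableOn ℂ (fun w ↦ Complex.exp (l * w) / w) s :=
  DifferentiableOn.div (by fun_prop) differentiableOn_id fun _ hw h0 ↦ hs (h0 ▸ hw)

variable {l : ℝ}

lemma norm_integral_exp_div_horizontal_le (hl : l ≠ 0) (hpq : p ≤ q) {c : ℝ} (hc : c ≠ 0) :
    ‖∫ x : ℝ in p..q, Complex.exp (l * (x + c * I)) / (x + c * I)‖ ≤
      (Real.exp (l * q) - Real.exp (l * p)) / l * (1 / |c|) := by
  have hpoint (x : ℝ) : ‖Complex.exp (l * (x + c * I)) / (x + c * I)‖ ≤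
      Real.exp (l * x) * (1 / |c|) := by
    have him : |c| ≤ ‖(x : ℂ) + c * I‖ := by simpa using Complex.abs_im_le_norm ((x : ℂ) + c * I)
    have : 0 < |c| := abs_pos.2 hc
    rw [norm_div, Complex.norm_exp, div_eq_mul_one_div, show (l * (x + c * I)).re = l * x by simp]
    gcongr
  refine (intervalIntegral.norm_integral_le_of_norm_le hpq (Eventually.of_forall fun x _ ↦ hpoint x)
    (Continuous.intervalIntegrable (by fun_prop) _ _)).trans_eq ?_
  rw [intervalIntegral.integral_mul_const, intervalIntegral.integral_comp_mul_left _ hl,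
    integral_exp, smul_eq_mul, inv_mul_eq_div]

lemma norm_integral_exp_div_vertical_le {c : ℝ} (hc : 1 ≤ |c|) :
    ‖∫ y : ℝ in u..v, Complex.exp (l * (c + y * I)) / (c + y * I)‖ ≤
      Real.exp (l * c) * |v - u| := by
  refine intervalIntegral.norm_integral_le_of_norm_le_const fun y _ ↦ ?_
  have hre : |c| ≤ ‖(c : ℂ) + y * I‖ := by simpa using Complex.abs_re_le_norm ((c : ℂ) + y * I)
  rw [norm_div, Complex.norm_exp, show (l * (c + y * I)).re = l * c by simp]
  exact div_le_self (Real.exp_pos _).le (hc.trans hre)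

lemma tendsto_integral_exp_div_vertical {f : Filter ℝ} (hl : l ≠ 0)
    (hf : Tendsto (fun c ↦ l * c) f atBot) :
    Tendsto (fun c : ℝ ↦ ∫ y : ℝ in u..v, Complex.exp (l * (c + y * I)) / (c + y * I)) f (𝓝 0) := by
  have hlim : Tendsto (fun c ↦ Real.exp (l * c) * |v - u|) f (𝓝 0) := by
    simpa using (Real.tendsto_exp_atBot.comp hf).mul_const |v - u|
  refine squeeze_zero_norm' ?_ hlim
  filter_upwards [hf.eventually_le_atBot (-|l|)] with c hc
  refine norm_integral_exp_div_vertical_le (le_of_mul_le_mul_left ?_ (abs_pos.2 hl))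
  rw [← abs_mul, mul_one]
  exact le_abs.2 (Or.inr (by linarith))

lemma norm_integral_exp_div_sub_rectIntegral_le (hl : l ≠ 0) (hpq : p ≤ q) (hu : u ≠ 0)
    (hv : v ≠ 0) :
    ‖I * (∫ y : ℝ in u..v, Complex.exp (l * (q + y * I)) / (q + y * I)) -
      I * (∫ y : ℝ in u..v, Complex.exp (l * (p + y * I)) / (p + y * I)) -
      rectIntegral (fun w ↦ Complex.exp (l * w) / w) p q u v‖ ≤
      (Real.exp (l * q) - Real.exp (l * p)) / l * (1 / |u| + 1 / |v|) := by
  rw [mul_add]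
  refine le_of_eq_of_le ?_ ((norm_sub_le _ _).trans
    (add_le_add (norm_integral_exp_div_horizontal_le hl hpq hu)
      (norm_integral_exp_div_horizontal_le hl hpq hv)))
  rw [← norm_neg, rectIntegral]
  congr 1
  ring

lemma norm_integral_exp_div_sub_le {b : ℝ} (hl : 0 < l) (hb : 0 < b) (hu : u ≠ 0) (hv : v ≠ 0)
    (huv : u < v) :
    ‖(∫ y : ℝ in u..v, Complex.exp (l * (b + y * I)) / (b + y * I)) -
      (if u < 0 ∧ 0 < v then 2 * π else 0 : ℝ)‖ ≤ Real.exp (l * b) / l * (1 / |u| + 1 / |v|) := by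
  set d : ℝ := if u < 0 ∧ 0 < v then 2 * π else 0 with hd
  have hrect {p : ℝ} (hp : p < 0) :
      rectIntegral (fun w ↦ Complex.exp (l * w) / w) p b u v = I * d := by
    by_cases h : u < 0 ∧ 0 < v
    · rw [rectIntegral_exp_div l hp hb h.1 h.2, hd, if_pos h]
      push_cast
      ring
    · rw [hd, if_neg h, rectIntegral_eq_zero (differentiableOn_exp_div l fun h0 ↦ h ?_)]
      · simp
      · obtain ⟨hu0, hv0⟩ : u ≤ 0 ∧ 0 ≤ v := by simpa [Set.uIcc_of_le huv.le] using h0.2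
        exact ⟨hu0.lt_of_ne hu, hv0.lt_of_ne' hv⟩
  set V : ℝ → ℂ := fun c ↦ ∫ y : ℝ in u..v, Complex.exp (l * (c + y * I)) / (c + y * I)
  have hlim : Tendsto (fun p ↦ ‖I * V b - I * V p - I * d‖) atBot (𝓝 ‖V b - d‖) := by
    have h := (((tendsto_integral_exp_div_vertical (u := u) (v := v) hl.ne'
      (tendsto_id.const_mul_atBot hl)).const_mul I).const_sub (I * V b)).sub_const (I * d)
    rw [mul_zero, sub_zero, ← mul_sub] at h
    simpa using h.norm
  refine le_of_tendsto hlim ?_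
  filter_upwards [eventually_lt_atBot 0] with p hp
  rw [← hrect hp]
  refine (norm_integral_exp_div_sub_rectIntegral_le hl.ne' (hp.trans hb).le hu hv).trans ?_
  gcongr
  exact sub_le_self _ (Real.exp_pos _).le

lemma norm_integral_exp_div_le {b : ℝ} (hl : l < 0) (hb : 0 < b) (hu : u ≠ 0) (hv : v ≠ 0) :
    ‖∫ y : ℝ in u..v, Complex.exp (l * (b + y * I)) / (b + y * I)‖ ≤
      Real.exp (l * b) / |l| * (1 / |u| + 1 / |v|) := by
  set V : ℝ → ℂ := fun c ↦ ∫ y : ℝ in u..v, Complex.exp (l * (c + y * I)) / (c + y * I)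
  have hlim : Tendsto (fun q ↦ ‖I * V q - I * V b - 0‖) atTop (𝓝 ‖V b‖) := by
    have h := (((tendsto_integral_exp_div_vertical (u := u) (v := v) hl.ne
      (tendsto_id.const_mul_atTop_of_neg hl)).const_mul I).sub_const (I * V b)).sub_const 0
    rw [mul_zero, zero_sub, sub_zero] at h
    simpa using h.norm
  refine le_of_tendsto hlim ?_
  filter_upwards [eventually_gt_atTop b] with q hq
  rw [← rectIntegral_eq_zero (differentiableOn_exp_div l fun h0 ↦ ?_)]
  · refine (norm_integral_exp_div_sub_rectIntegral_le hl.ne hq.le hu hv).trans ?_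
    rw [abs_of_neg hl, ← neg_div_neg_eq, neg_sub]
    have hl' := neg_pos.2 hl
    gcongr
    exact sub_le_self _ (Real.exp_pos _).le
  · obtain ⟨hb0, -⟩ : b ≤ 0 ∧ 0 ≤ q := by simpa [Set.uIcc_of_le hq.le] using h0.1
    linarith

end Perron

/-! ### Growth of the zeta function -/

section RightHalfPlane

/-- The fractional part on `(1, ∞)`, extended by zero; `ζ` is expressed through its Mellin
transform. -/
noncomputable def fractTail : ℝ → ℂ :=
  Set.indicator (Set.Ioi 1) fun t ↦ ((Int.fract t : ℝ) : ℂ)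

lemma norm_fractTail_le_one (t : ℝ) : ‖fractTail t‖ ≤ 1 :=
  (norm_indicator_le_norm_self _ t).trans <| by
    simpa [abs_of_nonneg (Int.fract_nonneg t)] using (Int.fract_lt_one t).le

lemma measurable_fractTail : Measurable fractTail :=
  (Complex.measurable_ofReal.comp measurable_fract).indicator measurableSet_Ioi

lemma mellin_fractTail (s : ℂ) :
    mellin fractTail (-s) =
      ∫ t in Set.Ioi (1 : ℝ), ((Int.fract t : ℝ) : ℂ) * (t : ℂ) ^ (-(s + 1)) := by
  have hindicator (t : ℝ) : (t : ℂ) ^ (-s - 1) • fractTail t =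
      (Set.Ioi (1 : ℝ)).indicator
        (fun t : ℝ ↦ ((Int.fract t : ℝ) : ℂ) * (t : ℂ) ^ (-(s + 1))) t := by
    simp only [fractTail, Set.indicator_apply, smul_eq_mul, mul_ite, mul_zero, neg_add']
    simp only [mul_comm]
  simp_rw [mellin, hindicator]
  rw [setIntegral_indicator measurableSet_Ioi,
    Set.inter_eq_right.2 (Set.Ioi_subset_Ioi zero_le_one)]

variable {s : ℂ}

lemma differentiableAt_mellin_fractTail (hs : 0 < s.re) :
    DifferentiableAt ℂ (mellin fractTail) (-s) := by
  refine mellin_differentiableAt_of_isBigO_rpow (a := 0) (b := -s.re - 1) ?_ ?_ (by simpa using hs)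
    ?_ (by simp)
  · refine LocallyIntegrable.locallyIntegrableOn ?_ _
    exact (locallyIntegrable_const (1 : ℝ)).mono measurable_fractTail.aestronglyMeasurable
      (Eventually.of_forall fun t ↦ by simpa using norm_fractTail_le_one t)
  · exact .of_bound 1 (Eventually.of_forall fun t ↦ by simpa using norm_fractTail_le_one t)
  · refine Asymptotics.IsBigO.of_bound 1 ?_
    filter_upwards [nhdsWithin_le_nhds (Iio_mem_nhds one_pos)] with t ht
    have hmem : t ∉ Set.Ioi (1 : ℝ) := Set.notMem_Ioi.2 (Set.mem_Iio.1 ht).le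
    rw [fractTail, Set.indicator_of_notMem hmem, norm_zero]
    positivity

lemma norm_fract_mul_cpow_le (s : ℂ) {t : ℝ} (ht : 0 < t) :
    ‖((Int.fract t : ℝ) : ℂ) * (t : ℂ) ^ (-(s + 1))‖ ≤ t ^ (-s.re - 1) := by
  rw [norm_mul, Complex.norm_real, Real.norm_of_nonneg (Int.fract_nonneg t),
    Complex.norm_cpow_eq_rpow_re_of_pos ht, Complex.neg_re, Complex.add_re, Complex.one_re,
    neg_add']
  exact mul_le_of_le_one_left (by positivity) (Int.fract_lt_one t).le

lemma integrableOn_fract_mul_cpow (hs : 0 < s.re) :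
    IntegrableOn (fun t : ℝ ↦ ((Int.fract t : ℝ) : ℂ) * (t : ℂ) ^ (-(s + 1))) (Set.Ioi 1) := by
  refine (integrableOn_Ioi_rpow_of_lt (a := -s.re - 1) (by linarith) one_pos).mono'
    ((Complex.measurable_ofReal.comp measurable_fract).mul
      (Complex.measurable_ofReal.pow_const _)).aestronglyMeasurable ?_
  filter_upwards [ae_restrict_mem measurableSet_Ioi] with t ht
  exact norm_fract_mul_cpow_le s (zero_lt_one.trans ht)

lemma norm_mellin_fractTail_le (hs : 0 < s.re) : ‖mellin fractTail (-s)‖ ≤ 1 / s.re := by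
  rw [mellin_fractTail]
  have hlt : -s.re - 1 < -1 := by linarith
  refine (norm_integral_le_of_norm_le (integrableOn_Ioi_rpow_of_lt hlt one_pos) ?_).trans_eq ?_
  · filter_upwards [ae_restrict_mem measurableSet_Ioi] with t ht
    exact norm_fract_mul_cpow_le s (zero_lt_one.trans ht)
  · rw [integral_Ioi_rpow_of_lt hlt one_pos]
    simp

lemma riemannZeta₁_eq_mul (hs : s ≠ 1) : riemannZeta₁ s = (s - 1) * riemannZeta s := by
  rw [riemannZeta_eq_inv_sub_mul hs, mul_inv_cancel_left₀ (sub_ne_zero.2 hs)]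

lemma integral_floor_mul_cpow (hs : 1 < s.re) :
    ∫ t in Set.Ioi (1 : ℝ), ((⌊t⌋₊ : ℝ) : ℂ) * (t : ℂ) ^ (-(s + 1)) =
      1 / (s - 1) - mellin fractTail (-s) := by
  have hpow : ∫ t : ℝ in Set.Ioi (1 : ℝ), (t : ℂ) ^ (-s) = 1 / (s - 1) := by
    rw [integral_Ioi_cpow_of_lt (by simpa using hs) one_pos, Complex.ofReal_one, Complex.one_cpow,
      neg_add_eq_sub, ← neg_sub s 1, div_neg, neg_div, neg_neg]
  rw [← hpow, mellin_fractTail, ← integral_sub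
    (integrableOn_Ioi_cpow_of_lt (by simpa using hs) one_pos)
    (integrableOn_fract_mul_cpow (zero_lt_one.trans hs))]
  refine setIntegral_congr_fun measurableSet_Ioi fun t (ht : 1 < t) ↦ ?_
  have ht0 : 0 < t := zero_lt_one.trans ht
  have hfloor : (⌊t⌋₊ : ℝ) = t - Int.fract t := by
    rw [natCast_floor_eq_intCast_floor ht0.le, Int.self_sub_fract]
  have hcpow : (t : ℂ) ^ (-s) = t * (t : ℂ) ^ (-(s + 1)) := by
    rw [show -s = 1 + -(s + 1) by ring, Complex.cpow_add _ _ (Complex.ofReal_ne_zero.2 ht0.ne'),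
      Complex.cpow_one]
  simp only [hfloor, hcpow, Complex.ofReal_sub]
  ring

lemma riemannZeta₁_eq_sub_mellin_of_one_lt_re (hs : 1 < s.re) :
    riemannZeta₁ s = s - s * (s - 1) * mellin fractTail (-s) := by
  have hs1 : s ≠ 1 := fun h ↦ by simp [h] at hs
  have hzeta : riemannZeta s =
      s * ∫ t in Set.Ioi (1 : ℝ), ((⌊t⌋₊ : ℝ) : ℂ) * (t : ℂ) ^ (-(s + 1)) := by
    rw [← LSeries_one_eq_riemannZeta hs, LSeries_eq_mul_integral' 1 zero_le_one hs]
    · simp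
    · simpa using Asymptotics.isBigO_refl (fun n : ℕ ↦ (n : ℝ)) atTop
  rw [riemannZeta₁_eq_mul hs1, hzeta, integral_floor_mul_cpow hs]
  field_simp [sub_ne_zero.2 hs1]

lemma riemannZeta₁_eq_sub_mellin (hs : 0 < s.re) :
    riemannZeta₁ s = s - s * (s - 1) * mellin fractTail (-s) := by
  have hopen (a : ℝ) : IsOpen {z : ℂ | a < z.re} := isOpen_lt continuous_const Complex.continuous_re
  have hleft : AnalyticOnNhd ℂ riemannZeta₁ {z : ℂ | 0 < z.re} :=
    differentiable_riemannZeta₁.differentiableOn.analyticOnNhd (hopen 0)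
  have hright : AnalyticOnNhd ℂ (fun z ↦ z - z * (z - 1) * mellin fractTail (-z))
      {z : ℂ | 0 < z.re} := by
    refine DifferentiableOn.analyticOnNhd (fun z hz ↦ ?_) (hopen 0)
    have hmellin : DifferentiableAt ℂ (fun z ↦ mellin fractTail (-z)) z :=
      (differentiableAt_mellin_fractTail hz).comp z differentiableAt_id.neg
    exact DifferentiableAt.differentiableWithinAt (by fun_prop)
  refine hleft.eqOn_of_preconnected_of_eventuallyEq hright
    (convex_halfSpace_re_gt 0).isPreconnected (z₀ := 2) (by simp) ?_ hs
  filter_upwards [(hopen 1).mem_nhds (show (2 : ℂ) ∈ {z : ℂ | 1 < z.re} by simp)] with z hz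
  exact riemannZeta₁_eq_sub_mellin_of_one_lt_re hz

lemma norm_riemannZeta₁_le (hs : 1 / 5 ≤ s.re) : ‖riemannZeta₁ s‖ ≤ 6 * (1 + ‖s‖) ^ 2 := by
  have hpos : 0 < s.re := by linarith
  have hmellin : ‖mellin fractTail (-s)‖ ≤ 5 :=
    (norm_mellin_fractTail_le hpos).trans (by rw [div_le_iff₀ hpos]; linarith)
  have hsub : ‖s - 1‖ ≤ ‖s‖ + 1 := by simpa using norm_sub_le s 1
  calc ‖riemannZeta₁ s‖ = ‖s - s * (s - 1) * mellin fractTail (-s)‖ := by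
        rw [riemannZeta₁_eq_sub_mellin hpos]
    _ ≤ ‖s‖ + ‖s‖ * ‖s - 1‖ * ‖mellin fractTail (-s)‖ := by
        simpa only [norm_mul] using norm_sub_le s (s * (s - 1) * mellin fractTail (-s))
    _ ≤ ‖s‖ + ‖s‖ * (‖s‖ + 1) * 5 := by gcongr
    _ ≤ 6 * (1 + ‖s‖) ^ 2 := by nlinarith [norm_nonneg s]

end RightHalfPlane

section LeftHalfPlane

lemma norm_Gamma_le_Gamma_re {s : ℂ} (hs : 0 < s.re) : ‖Complex.Gamma s‖ ≤ Real.Gamma s.re := by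
  rw [Complex.Gamma_eq_integral hs, Real.Gamma_eq_integral hs, Complex.GammaIntegral]
  refine (norm_integral_le_integral_norm _).trans_eq
    (setIntegral_congr_fun measurableSet_Ioi fun t (ht : 0 < t) ↦ ?_)
  simp [Complex.norm_cpow_eq_rpow_re_of_pos ht, Complex.norm_exp]

lemma norm_cos_le_exp_norm (w : ℂ) : ‖Complex.cos w‖ ≤ Real.exp ‖w‖ := by
  have hexp (v : ℂ) : ‖Complex.exp (v * I)‖ ≤ Real.exp ‖v‖ := by
    simpa using Complex.norm_exp_le_exp_norm (v * I)
  have hneg := hexp (-w)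
  rw [norm_neg] at hneg
  rw [Complex.cos, norm_div, Complex.norm_ofNat, div_le_iff₀ two_pos]
  linarith [norm_add_le (Complex.exp (w * I)) (Complex.exp (-w * I)), hexp w]

lemma Gamma_le_pow {σ : ℝ} (hσ : 4 / 5 ≤ σ) : Real.Gamma σ ≤ (⌈σ⌉₊ + 1 : ℝ) ^ (⌈σ⌉₊ + 1) := by
  have hpos : 0 < σ := by linarith
  have hceil := Nat.le_ceil σ
  have hshift : Real.Gamma (σ + 2) = (σ + 1) * σ * Real.Gamma σ := by
    rw [show σ + 2 = σ + 1 + 1 by ring, Real.Gamma_add_one (by linarith),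
      Real.Gamma_add_one hpos.ne', mul_assoc]
  calc Real.Gamma σ ≤ Real.Gamma (σ + 2) := by
        rw [hshift]
        exact le_mul_of_one_le_left (Real.Gamma_pos_of_pos hpos).le (by nlinarith)
    _ ≤ Real.Gamma ((⌈σ⌉₊ + 1 : ℕ) + 1) :=
        Real.Gamma_strictMonoOn_Ici.monotoneOn (Set.mem_Ici.2 (by linarith))
          (Set.mem_Ici.2 (by push_cast; linarith)) (by push_cast; linarith)
    _ ≤ (⌈σ⌉₊ + 1 : ℝ) ^ (⌈σ⌉₊ + 1) := by
        rw [Real.Gamma_nat_eq_factorial]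
        exact_mod_cast Nat.factorial_le_pow (⌈σ⌉₊ + 1)

lemma rpow_self_le_exp {x ε : ℝ} (hx : 0 < x) (hε : 0 < ε) :
    x ^ x ≤ Real.exp (x ^ (1 + ε) / ε) := by
  rw [Real.rpow_def_of_pos hx, Real.exp_le_exp, mul_comm, Real.rpow_add hx, Real.rpow_one,
    mul_div_assoc]
  gcongr
  exact Real.log_le_rpow_div hx.le hε

lemma Gamma_le_exp {σ r : ℝ} (hr : 1 ≤ r) (hσ : 4 / 5 ≤ σ) (hσr : σ ≤ r + 1) :
    Real.Gamma σ ≤ Real.exp (32 * r ^ (5 / 4 : ℝ)) := by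
  have hceil : (⌈σ⌉₊ : ℝ) + 1 ≤ 4 * r := by
    linarith [Nat.ceil_lt_add_one (show 0 ≤ σ by linarith)]
  have hfour : (4 : ℝ) ^ (5 / 4 : ℝ) ≤ 8 := by
    calc (4 : ℝ) ^ (5 / 4 : ℝ) ≤ 4 ^ (3 / 2 : ℝ) :=
          Real.rpow_le_rpow_of_exponent_le (by norm_num) (by norm_num)
      _ = ((2 : ℝ) ^ (2 : ℝ)) ^ (3 / 2 : ℝ) := by congr 1; norm_num
      _ = 8 := by rw [← Real.rpow_mul two_pos.le]; norm_num
  refine (Gamma_le_pow hσ).trans ?_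
  have hself := rpow_self_le_exp (x := ⌈σ⌉₊ + 1) (ε := 1 / 4) (by positivity) (by norm_num)
  have hcast := Real.rpow_natCast (⌈σ⌉₊ + 1 : ℝ) (⌈σ⌉₊ + 1)
  push_cast at hcast
  rw [hcast] at hself
  refine hself.trans (Real.exp_le_exp.2 ?_)
  calc (⌈σ⌉₊ + 1 : ℝ) ^ (1 + 1 / 4 : ℝ) / (1 / 4) ≤ (4 * r) ^ (1 + 1 / 4 : ℝ) / (1 / 4) := by gcongr
    _ = 4 * (4 ^ (5 / 4 : ℝ) * r ^ (5 / 4 : ℝ)) := by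
        rw [Real.mul_rpow (by norm_num) (by linarith)]
        norm_num
        ring
    _ ≤ 4 * (8 * r ^ (5 / 4 : ℝ)) := by gcongr
    _ = 32 * r ^ (5 / 4 : ℝ) := by ring

lemma pow_three_le_exp {r : ℝ} (hr : 1 ≤ r) : 216 * r ^ 3 ≤ Real.exp (9 * r) := by
  have hexp : r ≤ Real.exp r := by linarith [Real.add_one_le_exp r]
  have h216 : (216 : ℝ) ≤ Real.exp (6 * r) := by
    calc (216 : ℝ) ≤ 2.7 ^ 6 := by norm_num
      _ ≤ Real.exp 1 ^ 6 := by gcongr; linarith [Real.exp_one_gt_d9]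
      _ = Real.exp 6 := by rw [← Real.exp_nat_mul]; norm_num
      _ ≤ Real.exp (6 * r) := Real.exp_le_exp.2 (by linarith)
  calc 216 * r ^ 3 ≤ Real.exp (6 * r) * Real.exp r ^ 3 := by gcongr
    _ = Real.exp (9 * r) := by
        rw [← Real.exp_nat_mul, ← Real.exp_add]
        congr 1
        push_cast
        ring

lemma norm_riemannZeta_one_sub_le {s : ℂ} (hs : 0 < s.re) (hs1 : s ≠ 1) :
    ‖riemannZeta (1 - s)‖ ≤
      2 * Real.Gamma s.re * Real.exp (2 * ‖s‖) * ‖riemannZeta s‖ := by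
  have hnat (n : ℕ) : s ≠ -n := fun h ↦ by
    have hre := congrArg Complex.re h
    rw [Complex.neg_re, Complex.natCast_re] at hre
    linarith [n.cast_nonneg (α := ℝ)]
  have hpow : ‖(2 * π : ℂ) ^ (-s)‖ ≤ 1 := by
    rw [show (2 * π : ℂ) = ((2 * π : ℝ) : ℂ) by push_cast; ring,
      Complex.norm_cpow_eq_rpow_re_of_pos (by positivity)]
    exact Real.rpow_le_one_of_one_le_of_nonpos (by linarith [Real.pi_gt_three])
      (by rw [Complex.neg_re]; linarith)
  have hcos : ‖Complex.cos (π * s / 2)‖ ≤ Real.exp (2 * ‖s‖) := by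
    refine (norm_cos_le_exp_norm _).trans (Real.exp_le_exp.2 ?_)
    rw [norm_div, norm_mul, Complex.norm_real, Real.norm_of_nonneg Real.pi_pos.le,
      Complex.norm_ofNat]
    nlinarith [norm_nonneg s, Real.pi_le_four]
  rw [riemannZeta_one_sub hnat hs1]
  simp only [norm_mul, Complex.norm_ofNat]
  calc 2 * ‖(2 * π : ℂ) ^ (-s)‖ * ‖Complex.Gamma s‖ * ‖Complex.cos (π * s / 2)‖ * ‖riemannZeta s‖
      ≤ 2 * 1 * Real.Gamma s.re * Real.exp (2 * ‖s‖) * ‖riemannZeta s‖ := by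
        have hGamma := norm_Gamma_le_Gamma_re hs
        have := Real.Gamma_pos_of_pos hs
        gcongr
    _ = 2 * Real.Gamma s.re * Real.exp (2 * ‖s‖) * ‖riemannZeta s‖ := by ring

lemma norm_riemannZeta_one_sub_le_mul_sq {z : ℂ} (hz : 1 ≤ ‖z‖) (hre : z.re ≤ 4 / 5) :
    ‖riemannZeta (1 - z)‖ ≤ 6 * (2 + ‖z‖) ^ 2 := by
  have hs1 : 1 - z ≠ 1 := by simpa using norm_pos_iff.1 (zero_lt_one.trans_le hz)
  have hre' : 1 / 5 ≤ (1 - z).re := by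
    rw [Complex.sub_re, Complex.one_re]
    linarith
  have hnorm : ‖1 - z‖ ≤ 1 + ‖z‖ := by simpa using norm_sub_le 1 z
  rw [riemannZeta_eq_inv_sub_mul hs1, norm_mul, norm_inv, sub_sub_cancel_left, norm_neg]
  calc ‖z‖⁻¹ * ‖riemannZeta₁ (1 - z)‖ ≤ 1 * (6 * (1 + ‖1 - z‖) ^ 2) := by
        gcongr
        · exact inv_le_one_of_one_le₀ hz
        · exact norm_riemannZeta₁_le hre'
    _ ≤ 6 * (2 + ‖z‖) ^ 2 := by
        have : 1 + ‖1 - z‖ ≤ 2 + ‖z‖ := by linarith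
        rw [one_mul]
        gcongr 6 * ?_ ^ 2

lemma norm_riemannZeta₁_le_exp_of_re_lt {z : ℂ} (hz : 1 ≤ ‖z‖) (hre : z.re < 1 / 5) :
    ‖riemannZeta₁ z‖ ≤ Real.exp (45 * ‖z‖ ^ (5 / 4 : ℝ)) := by
  have hzpow : ‖z‖ ≤ ‖z‖ ^ (5 / 4 : ℝ) := Real.self_le_rpow_of_one_le hz (by norm_num)
  have hz0 : z ≠ 0 := norm_pos_iff.1 (by linarith)
  have hs1 : 1 - z ≠ 1 := by simpa using hz0
  have hre' : 4 / 5 < (1 - z).re := by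
    rw [Complex.sub_re, Complex.one_re]
    linarith
  have hnorm : ‖1 - z‖ ≤ ‖z‖ + 1 := by simpa [add_comm] using norm_sub_le 1 z
  have hGamma := Gamma_le_exp hz hre'.le ((Complex.re_le_norm _).trans hnorm)
  have hzeta := norm_riemannZeta_one_sub_le_mul_sq hz (by linarith)
  have hfun := norm_riemannZeta_one_sub_le (by linarith) hs1
  rw [sub_sub_cancel] at hfun
  set r := ‖z‖
  calc ‖riemannZeta₁ z‖ = ‖1 - z‖ * ‖riemannZeta z‖ := by
        rw [riemannZeta₁_eq_mul (fun h ↦ by norm_num [h] at hre), norm_mul, norm_sub_rev]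
    _ ≤ (r + 1) * (2 * Real.exp (32 * r ^ (5 / 4 : ℝ)) * Real.exp (2 * (r + 1)) *
          (6 * (2 + r) ^ 2)) := by
        gcongr
        refine hfun.trans ?_
        gcongr
    _ = 12 * (r + 1) * (2 + r) ^ 2 *
          (Real.exp (32 * r ^ (5 / 4 : ℝ)) * Real.exp (2 * (r + 1))) := by ring
    _ ≤ 216 * r ^ 3 * (Real.exp (32 * r ^ (5 / 4 : ℝ)) * Real.exp (4 * r)) := by
        gcongr ?_ * (_ * Real.exp ?_)
        · calc 12 * (r + 1) * (2 + r) ^ 2 ≤ 12 * (2 * r) * (3 * r) ^ 2 := by gcongr <;> linarith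
            _ = 216 * r ^ 3 := by ring
        · linarith
    _ ≤ Real.exp (9 * r) * (Real.exp (32 * r ^ (5 / 4 : ℝ)) * Real.exp (4 * r)) := by
        gcongr
        exact pow_three_le_exp hz
    _ = Real.exp (9 * r + (32 * r ^ (5 / 4 : ℝ) + 4 * r)) := by
        rw [← Real.exp_add, ← Real.exp_add]
    _ ≤ Real.exp (45 * r ^ (5 / 4 : ℝ)) := Real.exp_le_exp.2 (by linarith)

lemma norm_riemannZeta₁_le_exp {z : ℂ} (hz : 1 ≤ ‖z‖) :
    ‖riemannZeta₁ z‖ ≤ Real.exp (45 * ‖z‖ ^ (5 / 4 : ℝ)) := by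
  rcases lt_or_ge z.re (1 / 5) with hre | hre
  · exact norm_riemannZeta₁_le_exp_of_re_lt hz hre
  have hzpow : ‖z‖ ≤ ‖z‖ ^ (5 / 4 : ℝ) := Real.self_le_rpow_of_one_le hz (by norm_num)
  calc ‖riemannZeta₁ z‖ ≤ 6 * (1 + ‖z‖) ^ 2 := norm_riemannZeta₁_le hre
    _ ≤ 216 * ‖z‖ ^ 3 := by nlinarith [mul_nonneg (sub_nonneg.2 hz) (sq_nonneg ‖z‖)]
    _ ≤ Real.exp (9 * ‖z‖) := pow_three_le_exp hz
    _ ≤ Real.exp (45 * ‖z‖ ^ (5 / 4 : ℝ)) := Real.exp_le_exp.2 (by linarith)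

end LeftHalfPlane

/-! ### Sums over the zeros -/

section Summability

lemma sum_le_of_sum_le_rpow {ι : Type*} {w r : ι → ℝ} {C p q : ℝ} (hw : ∀ i, 0 ≤ w i)
    (hr : ∀ i, 0 ≤ r i) (hq : 0 ≤ q)
    (hcount : ∀ R, 1 ≤ R → ∀ S : Finset ι, (∀ i ∈ S, r i ≤ R) → ∑ i ∈ S, w i ≤ C * R ^ p)
    (S : Finset ι) (k : ℕ) (hS : ∀ i ∈ S, r i ≤ 2 ^ k) :
    ∑ i ∈ S, w i / (1 + r i) ^ q ≤ C + ∑ j ∈ range k, C * 2 ^ p * ((2 : ℝ) ^ (p - q)) ^ j := by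
  classical
  induction k generalizing S with
  | zero =>
    simp only [range_zero, sum_empty, add_zero]
    refine (sum_le_sum fun i _ ↦ div_le_self (hw i) ?_).trans
      (by simpa using hcount 1 le_rfl S (by simpa using hS))
    exact Real.one_le_rpow (by linarith [hr i]) hq
  | succ k ih =>
    have hshell : ∑ i ∈ S with ¬ r i ≤ 2 ^ k, w i / (1 + r i) ^ q ≤
        C * 2 ^ p * ((2 : ℝ) ^ (p - q)) ^ k := by
      calc ∑ i ∈ S with ¬ r i ≤ 2 ^ k, w i / (1 + r i) ^ q
          ≤ ∑ i ∈ S with ¬ r i ≤ 2 ^ k, w i / (2 ^ k) ^ q := by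
            refine sum_le_sum fun i hi ↦ ?_
            have : (2 : ℝ) ^ k ≤ 1 + r i := by linarith [not_le.1 (mem_filter.1 hi).2]
            have := hw i
            gcongr
        _ ≤ C * (2 ^ (k + 1)) ^ p / (2 ^ k) ^ q := by
            rw [← sum_div]
            gcongr
            exact hcount _ (one_le_pow₀ one_le_two) _ fun i hi ↦ hS i (mem_filter.1 hi).1
        _ = C * 2 ^ p * ((2 : ℝ) ^ (p - q)) ^ k := by
            rw [pow_succ, Real.mul_rpow (by positivity) (by positivity), ← Real.rpow_pow_comm
              two_pos.le, ← Real.rpow_pow_comm two_pos.le, Real.rpow_sub two_pos, div_pow]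
            ring
    rw [sum_range_succ, ← add_assoc, ← sum_filter_add_sum_filter_not S fun i ↦ r i ≤ 2 ^ k]
    exact add_le_add (ih _ fun i hi ↦ (mem_filter.1 hi).2) hshell

lemma summable_div_rpow_of_sum_le_rpow {ι : Type*} {w r : ι → ℝ} {C p q : ℝ} (hw : ∀ i, 0 ≤ w i)
    (hr : ∀ i, 0 ≤ r i) (hq : 0 ≤ q) (hpq : p < q)
    (hcount : ∀ R, 1 ≤ R → ∀ S : Finset ι, (∀ i ∈ S, r i ≤ R) → ∑ i ∈ S, w i ≤ C * R ^ p) :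
    Summable fun i ↦ w i / (1 + r i) ^ q := by
  have hC : 0 ≤ C := by simpa using hcount 1 le_rfl ∅ (by simp)
  have hgeom : Summable fun j : ℕ ↦ C * 2 ^ p * ((2 : ℝ) ^ (p - q)) ^ j :=
    (summable_geometric_of_lt_one (by positivity)
      (Real.rpow_lt_one_of_one_lt_of_neg one_lt_two (by linarith))).mul_left _
  refine summable_of_sum_le (c := C + ∑' j : ℕ, C * 2 ^ p * ((2 : ℝ) ^ (p - q)) ^ j)
    (fun i ↦ div_nonneg (hw i) (Real.rpow_nonneg (by linarith [hr i]) q)) fun S ↦ ?_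
  obtain ⟨k, hk⟩ := pow_unbounded_of_one_lt (∑ i ∈ S, r i) one_lt_two
  refine (sum_le_of_sum_le_rpow hw hr hq hcount S k fun i hi ↦
    (single_le_sum (fun j _ ↦ hr j) hi).trans hk.le).trans ?_
  gcongr
  exact hgeom.sum_le_tsum _ fun _ _ ↦ by positivity

lemma tendsto_sum_of_summable {α β E : Type*} [NormedAddCommGroup E] [CompleteSpace E]
    {l : Filter α} {g : β → E} (hg : Summable fun b ↦ ‖g b‖) {S : α → Finset β}
    (hS : ∀ b, g b ≠ 0 → ∀ᶠ a in l, b ∈ S a) :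
    Tendsto (fun a ↦ ∑ b ∈ S a, g b) l (𝓝 (∑' b, g b)) := by
  classical
  have hsum (a : α) : ∑ b ∈ S a, g b = ∑' b, if b ∈ S a then g b else 0 := by
    rw [tsum_eq_sum (s := S a) fun b hb ↦ if_neg hb]
    exact sum_congr rfl fun b hb ↦ (if_pos hb).symm
  simp_rw [hsum]
  refine tendsto_tsum_of_dominated_convergence hg (fun b ↦ ?_) (Eventually.of_forall fun a b ↦ ?_)
  · by_cases hb : g b = 0
    · simp [hb, tendsto_const_nhds]
    · exact tendsto_const_nhds.congr' ((hS b hb).mono fun a ha ↦ (if_pos ha).symm)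
  · split_ifs <;> simp

end Summability

section ZerosOfZeta

lemma riemannZeta₁_zero : riemannZeta₁ 0 = 1 / 2 := by
  rw [riemannZeta₁_eq_mul zero_ne_one, riemannZeta_zero]
  norm_num

lemma riemannZeta₁_zero_ne_zero : riemannZeta₁ 0 ≠ 0 := by
  norm_num [riemannZeta₁_zero]

lemma riemannZeta₁_eq_zero_iff {ρ : ℂ} : riemannZeta₁ ρ = 0 ↔ ρ ≠ 1 ∧ riemannZeta ρ = 0 := by
  rcases eq_or_ne ρ 1 with rfl | hρ
  · simp
  · simp [riemannZeta₁_eq_mul hρ, sub_ne_zero.2 hρ, hρ]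

/-- The order of vanishing of the entire function `(s - 1) ζ(s)` at a point. -/
noncomputable def zeroOrder (ρ : ℂ) : ℕ := analyticOrderNatAt riemannZeta₁ ρ

lemma zeroOrder_ne_zero_iff {ρ : ℂ} : zeroOrder ρ ≠ 0 ↔ riemannZeta₁ ρ = 0 := by
  have htop := analyticOrderAt_ne_top_of_apply_ne_zero differentiable_riemannZeta₁
    riemannZeta₁_zero_ne_zero ρ
  rw [← (differentiable_riemannZeta₁.analyticAt ρ).analyticOrderAt_ne_zero, zeroOrder,
    analyticOrderNatAt]
  simp [htop]

lemma finite_zeros_norm_le (R : ℝ) : {ρ : ℂ | riemannZeta₁ ρ = 0 ∧ ‖ρ‖ ≤ R}.Finite :=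
  (isCompact_closedBall (0 : ℂ) R).inter_riemannZetaZeros_finite.subset fun ρ hρ ↦
    ⟨by simpa using hρ.2, mem_riemannZetaZeros.2 (riemannZeta₁_eq_zero_iff.1 hρ.1).2⟩

lemma eventually_cofinite_of_zeros {P : ℂ → Prop} (R : ℝ) (hzero : ∀ ρ, zeroOrder ρ = 0 → P ρ)
    (hlarge : ∀ ρ, riemannZeta₁ ρ = 0 → R < ‖ρ‖ → P ρ) : ∀ᶠ ρ in cofinite, P ρ := by
  refine eventually_cofinite.2 ((finite_zeros_norm_le R).subset fun ρ hρ ↦ ?_)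
  have hroot : riemannZeta₁ ρ = 0 := zeroOrder_ne_zero_iff.1 (mt (hzero ρ) hρ)
  exact ⟨hroot, not_lt.1 (mt (hlarge ρ hroot) hρ)⟩

lemma sum_zeroOrder_le {R : ℝ} (hR : 1 ≤ R) {S : Finset ℂ} (hS : ∀ ρ ∈ S, ‖ρ‖ ≤ R) :
    (∑ ρ ∈ S, zeroOrder ρ : ℝ) ≤ 400 * R ^ (5 / 4 : ℝ) := by
  have hR0 : 0 < R := by linarith
  have hjensen := sum_analyticOrderNatAt_le differentiable_riemannZeta₁ (c := 0)
    riemannZeta₁_zero_ne_zero (r := R) (R := 2 * R) (S := S)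
    (M := Real.exp (45 * (2 * R) ^ (5 / 4 : ℝ))) hR0 (by linarith)
    (Real.one_le_exp (by positivity))
    (fun z hz ↦ by
      rw [mem_sphere_zero_iff_norm] at hz
      simpa [hz] using norm_riemannZeta₁_le_exp (show 1 ≤ ‖z‖ by linarith)) (by simpa using hS)
  rw [riemannZeta₁_zero, mul_div_cancel_right₀ _ hR0.ne',
    Real.log_div (by positivity) (by norm_num), Real.log_exp] at hjensen
  refine hjensen.trans ?_
  have hlog : Real.log ‖(1 / 2 : ℂ)‖ = -Real.log 2 := by simp [Real.log_inv]
  have htwo : (2 * R) ^ (5 / 4 : ℝ) ≤ 4 * R ^ (5 / 4 : ℝ) := by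
    rw [Real.mul_rpow two_pos.le hR0.le]
    gcongr
    calc (2 : ℝ) ^ (5 / 4 : ℝ) ≤ 2 ^ (2 : ℝ) :=
          Real.rpow_le_rpow_of_exponent_le one_le_two (by norm_num)
      _ = 4 := by norm_num
  have hone : 1 ≤ R ^ (5 / 4 : ℝ) := Real.one_le_rpow hR (by norm_num)
  rw [hlog, div_le_iff₀ (Real.log_pos one_lt_two)]
  nlinarith [Real.log_two_gt_d9]

lemma summable_zeroOrder_div_rpow : Summable fun ρ : ℂ ↦ (zeroOrder ρ : ℝ) / ‖ρ‖ ^ (3 / 2 : ℝ) := by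
  have hshift : Summable fun ρ : ℂ ↦ (zeroOrder ρ : ℝ) / (1 + ‖ρ‖) ^ (3 / 2 : ℝ) :=
    summable_div_rpow_of_sum_le_rpow (p := 5 / 4) (fun _ ↦ by positivity) norm_nonneg (by norm_num)
      (by norm_num) fun _ hR _ hS ↦ sum_zeroOrder_le hR hS
  refine (hshift.mul_left (2 ^ (3 / 2 : ℝ))).of_norm_bounded_eventually
    (eventually_cofinite_of_zeros 1 (fun ρ hρ ↦ by simp [hρ]) fun ρ _ hlarge ↦ ?_)
  have hle : 1 + ‖ρ‖ ≤ 2 * ‖ρ‖ := by linarith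
  have hρ : 0 < ‖ρ‖ := by linarith
  rw [Real.norm_of_nonneg (by positivity)]
  calc (zeroOrder ρ : ℝ) / ‖ρ‖ ^ (3 / 2 : ℝ)
      = 2 ^ (3 / 2 : ℝ) * (zeroOrder ρ / (2 * ‖ρ‖) ^ (3 / 2 : ℝ)) := by
        rw [Real.mul_rpow two_pos.le hρ.le]
        field_simp
    _ ≤ 2 ^ (3 / 2 : ℝ) * (zeroOrder ρ / (1 + ‖ρ‖) ^ (3 / 2 : ℝ)) := by gcongr

lemma summable_zeroOrder_div_sq : Summable fun ρ : ℂ ↦ (zeroOrder ρ : ℝ) / ‖ρ‖ ^ 2 := by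
  refine summable_zeroOrder_div_rpow.of_norm_bounded_eventually
    (eventually_cofinite_of_zeros 1 (fun ρ hρ ↦ by simp [hρ]) fun ρ _ hlarge ↦ ?_)
  have hpow : ‖ρ‖ ^ (3 / 2 : ℝ) ≤ ‖ρ‖ ^ 2 := by
    rw [← Real.rpow_two]
    exact Real.rpow_le_rpow_of_exponent_le hlarge.le (by norm_num)
  have : 0 < ‖ρ‖ := by linarith
  rw [Real.norm_of_nonneg (by positivity)]
  gcongr

lemma summable_zeroOrder_mul_inv_add_inv (s : ℂ) :
    Summable fun ρ : ℂ ↦ (zeroOrder ρ : ℂ) * (1 / (s - ρ) + 1 / ρ) := by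
  refine (summable_zeroOrder_div_sq.mul_left (2 * ‖s‖)).of_norm_bounded_eventually
    (eventually_cofinite_of_zeros (2 * ‖s‖) (fun ρ hρ ↦ by simp [hρ]) fun ρ _ hlarge ↦ ?_)
  have hρ : 0 < ‖ρ‖ := by linarith [norm_nonneg s]
  have hhalf : ‖ρ‖ / 2 ≤ ‖s - ρ‖ := by
    linarith [norm_sub_norm_le ρ s, norm_sub_rev ρ s]
  have hρ0 : ρ ≠ 0 := norm_pos_iff.1 hρ
  have hs0 : s - ρ ≠ 0 := norm_pos_iff.1 (by linarith)
  calc ‖(zeroOrder ρ : ℂ) * (1 / (s - ρ) + 1 / ρ)‖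
      = zeroOrder ρ * (‖s‖ / (‖s - ρ‖ * ‖ρ‖)) := by
        rw [show 1 / (s - ρ) + 1 / ρ = s / ((s - ρ) * ρ) by field_simp; ring]
        simp only [norm_mul, norm_div, Complex.norm_natCast]
    _ ≤ zeroOrder ρ * (‖s‖ / (‖ρ‖ / 2 * ‖ρ‖)) := by gcongr
    _ = 2 * ‖s‖ * (zeroOrder ρ / ‖ρ‖ ^ 2) := by field_simp

lemma logDeriv_riemannZeta₁_zero : logDeriv riemannZeta₁ 0 = -1 + Real.log (2 * π) := by
  have heq : riemannZeta₁ =ᶠ[𝓝 0] fun s ↦ (s - 1) * riemannZeta s := by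
    filter_upwards [isOpen_ne.mem_nhds (zero_ne_one (α := ℂ))] with s hs
    exact riemannZeta₁_eq_mul hs
  have hlog : Complex.log (2 * π) = Real.log (2 * π) := by
    rw [Complex.ofReal_log (by positivity)]
    push_cast
    rfl
  have hzeta := (differentiableAt_riemannZeta (s := 0) zero_ne_one).hasDerivAt
  rw [deriv_riemannZeta_zero, hlog] at hzeta
  have hderiv := (((hasDerivAt_id (0 : ℂ)).sub_const 1).fun_mul hzeta).deriv
  simp only [id_eq] at hderiv
  rw [logDeriv_apply, heq.deriv_eq, riemannZeta₁_zero, hderiv, riemannZeta_zero]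
  ring

lemma hasSum_logDeriv_riemannZeta₁ {s : ℂ} (hs : riemannZeta₁ s ≠ 0) :
    HasSum (fun ρ : ℂ ↦ (zeroOrder ρ : ℂ) * (1 / (s - ρ) + 1 / ρ))
      (logDeriv riemannZeta₁ s - (-1 + Real.log (2 * π))) := by
  have hmem (n : ℕ) (ρ : ℂ) :
      ρ ∈ (finite_zeros_norm_le n).toFinset ↔ riemannZeta₁ ρ = 0 ∧ ‖ρ‖ ≤ n := by simp
  have hlim := tendsto_sum_zeros_logDeriv differentiable_riemannZeta₁ riemannZeta₁_zero_ne_zero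
    (by norm_num) (by norm_num) (fun z hz ↦ norm_riemannZeta₁_le_exp hz) hmem hs
  have hsummable := summable_zeroOrder_mul_inv_add_inv s
  have htsum := tendsto_sum_of_summable hsummable.norm (l := atTop)
    (S := fun n : ℕ ↦ (finite_zeros_norm_le n).toFinset) fun ρ hρ ↦ by
      have hroot := zeroOrder_ne_zero_iff.1 fun (h : zeroOrder ρ = 0) ↦ hρ (by simp [h])
      filter_upwards [eventually_ge_atTop ⌈‖ρ‖⌉₊] with n hn
      exact (hmem n ρ).2 ⟨hroot, Nat.ceil_le.1 hn⟩
  rw [← logDeriv_riemannZeta₁_zero, tendsto_nhds_unique hlim htsum]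
  exact hsummable.hasSum

end ZerosOfZeta

section FunctionalEquation

variable {ρ : ℂ}

lemma riemannZeta₁_ne_zero_of_one_le_re (hρ : 1 ≤ ρ.re) : riemannZeta₁ ρ ≠ 0 := fun h ↦
  riemannZeta_ne_zero_of_one_le_re hρ (riemannZeta₁_eq_zero_iff.1 h).2

lemma im_eq_zero_and_re_le_of_riemannZeta₁_eq_zero (h : riemannZeta₁ ρ = 0) (hre : ρ.re ≤ 0) :
    ρ.im = 0 ∧ ρ.re ≤ -2 := by
  have hρ : ρ ≠ 0 := fun h0 ↦ riemannZeta₁_zero_ne_zero (h0 ▸ h)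
  have hone_sub : 1 ≤ (1 - ρ).re := by simpa using hre
  have hcompleted : completedRiemannZeta ρ ≠ 0 := by
    intro hzero
    have hne : 1 - ρ ≠ 0 := fun h0 ↦ by norm_num [h0] at hone_sub
    refine riemannZeta_ne_zero_of_one_le_re hone_sub ?_
    rw [riemannZeta_def_of_ne_zero hne, completedRiemannZeta_one_sub, hzero, zero_div]
  have hGamma : Complex.Gammaℝ ρ = 0 := by
    have hzeta := (riemannZeta₁_eq_zero_iff.1 h).2
    rw [riemannZeta_def_of_ne_zero hρ, div_eq_zero_iff] at hzeta
    exact hzeta.resolve_left hcompleted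
  obtain ⟨n, rfl⟩ := Complex.Gammaℝ_eq_zero_iff.1 hGamma
  have hn : (1 : ℝ) ≤ n := by
    rw [Nat.one_le_cast, Nat.one_le_iff_ne_zero]
    rintro rfl
    simp at hρ
  exact ⟨by simp, by simpa using hn⟩

lemma mem_strip_or_of_riemannZeta₁_eq_zero (h : riemannZeta₁ ρ = 0) :
    (0 < ρ.re ∧ ρ.re < 1) ∨ (ρ.im = 0 ∧ ρ.re ≤ -2) := by
  rcases le_or_gt ρ.re 0 with hre | hre
  · exact .inr (im_eq_zero_and_re_le_of_riemannZeta₁_eq_zero h hre)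
  · exact .inl ⟨hre, not_le.1 fun h1 ↦ riemannZeta₁_ne_zero_of_one_le_re h1 h⟩

lemma zeroOrder_eq_analyticOrderNatAt_riemannZeta (hρ : ρ ≠ 1) :
    zeroOrder ρ = analyticOrderNatAt riemannZeta ρ := by
  have heq : riemannZeta₁ =ᶠ[𝓝 ρ] (fun s ↦ s - 1) * riemannZeta := by
    filter_upwards [isOpen_ne.mem_nhds hρ] with s hs
    exact riemannZeta₁_eq_mul hs
  have hsub : AnalyticAt ℂ (fun s : ℂ ↦ s - 1) ρ := by fun_prop
  rw [zeroOrder, analyticOrderNatAt, analyticOrderNatAt, analyticOrderAt_congr heq,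
    analyticOrderAt_mul hsub (analyticOn_riemannZeta ρ hρ),
    hsub.analyticOrderAt_eq_zero.2 (sub_ne_zero.2 hρ), zero_add]

lemma zetaZeroMultiplicity_eq_zeroOrder (hρ : ρ ≠ 1) : zetaZeroMultiplicity ρ = zeroOrder ρ := by
  rw [zetaZeroMultiplicity, dif_pos (analyticOn_riemannZeta ρ hρ),
    zeroOrder_eq_analyticOrderNatAt_riemannZeta hρ, analyticOrderNatAt]

lemma analyticOrderAt_completedRiemannZeta (h0 : 0 < ρ.re) (h1 : ρ.re < 1) :
    analyticOrderAt riemannZeta ρ = analyticOrderAt completedRiemannZeta ρ := by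
  have hne0 : ρ ≠ 0 := fun h ↦ by simp [h] at h0
  have hne1 : ρ ≠ 1 := fun h ↦ by simp [h] at h1
  have heq : riemannZeta =ᶠ[𝓝 ρ] completedRiemannZeta * fun s ↦ (Complex.Gammaℝ s)⁻¹ := by
    filter_upwards [isOpen_ne.mem_nhds hne0] with s hs
    exact riemannZeta_def_of_ne_zero hs
  have hGamma := Complex.differentiable_Gammaℝ_inv.analyticAt ρ
  have hcompleted : AnalyticAt ℂ completedRiemannZeta ρ := by
    refine DifferentiableOn.analyticAt (s := {0, 1}ᶜ) (fun s hs ↦ ?_)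
      ((Set.toFinite {0, 1}).isClosed.isOpen_compl.mem_nhds (by simp [hne0, hne1]))
    simp only [Set.mem_compl_iff, Set.mem_insert_iff, Set.mem_singleton_iff, not_or] at hs
    exact (differentiableAt_completedZeta hs.1 hs.2).differentiableWithinAt
  rw [analyticOrderAt_congr heq, analyticOrderAt_mul hcompleted hGamma,
    hGamma.analyticOrderAt_eq_zero.2 (inv_ne_zero (Complex.Gammaℝ_ne_zero_of_re_pos h0)), add_zero]

lemma zeroOrder_one_sub (h0 : 0 < ρ.re) (h1 : ρ.re < 1) : zeroOrder (1 - ρ) = zeroOrder ρ := by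
  have hne0 : 1 - ρ ≠ 1 := fun h ↦ by simp [sub_eq_self.1 h] at h0
  have hne1 : ρ ≠ 1 := fun h ↦ by simp [h] at h1
  have hsymm : completedRiemannZeta ∘ (fun s ↦ 1 - s) = completedRiemannZeta :=
    funext completedRiemannZeta_one_sub
  have hcomp := analyticOrderAt_comp_of_deriv_ne_zero (f := completedRiemannZeta)
    (g := fun s ↦ 1 - s) (z₀ := ρ) (by fun_prop) (by simp)
  rw [hsymm] at hcomp
  rw [zeroOrder_eq_analyticOrderNatAt_riemannZeta hne0,
    zeroOrder_eq_analyticOrderNatAt_riemannZeta hne1, analyticOrderNatAt, analyticOrderNatAt,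
    analyticOrderAt_completedRiemannZeta h0 h1,
    analyticOrderAt_completedRiemannZeta (by simpa using h1) (by simpa using h0), hcomp]

end FunctionalEquation

section LocalCount

open scoped LSeries.notation in
lemma one_fourth_le_norm_riemannZeta {s : ℂ} (hs : 2 ≤ s.re) : 1 / 4 ≤ ‖riemannZeta s‖ := by
  have hs1 : 1 < s.re := by linarith
  have hmoebius : ‖L ↗ArithmeticFunction.moebius s‖ ≤ π ^ 2 / 6 := by
    refine tsum_of_norm_bounded hasSum_zeta_two fun n ↦ ?_
    rw [LSeries.norm_term_eq]
    split_ifs with hn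
    · positivity
    · have hn1 : (1 : ℝ) ≤ n := Nat.one_le_cast.2 (Nat.one_le_iff_ne_zero.2 hn)
      gcongr
      · exact_mod_cast ArithmeticFunction.abs_moebius_le_one
      · rw [← Real.rpow_two]
        exact Real.rpow_le_rpow_of_exponent_le hn1 hs
  have hinv := congrArg norm (ArithmeticFunction.LSeries_zeta_mul_Lseries_moebius hs1)
  rw [norm_mul, norm_one, ArithmeticFunction.LSeries_zeta_eq_riemannZeta hs1] at hinv
  have hpi : π ^ 2 / 6 ≤ 4 := by nlinarith [Real.pi_pos, Real.pi_le_four]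
  nlinarith [norm_nonneg (riemannZeta s)]

lemma one_fourth_le_norm_riemannZeta₁ {s : ℂ} (hs : 2 ≤ s.re) : 1 / 4 ≤ ‖riemannZeta₁ s‖ := by
  have hs1 : s ≠ 1 := fun h ↦ by norm_num [h] at hs
  have hsub : 1 ≤ ‖s - 1‖ := by
    have hre := Complex.re_le_norm (s - 1)
    rw [Complex.sub_re, Complex.one_re] at hre
    linarith
  rw [riemannZeta₁_eq_mul hs1, norm_mul]
  exact (one_fourth_le_norm_riemannZeta hs).trans (le_mul_of_one_le_left (norm_nonneg _) hsub)

variable {t : ℝ} {S : Finset ℂ}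

lemma sum_zeroOrder_le_of_half_le_re
    (hS : ∀ ρ ∈ S, 1 / 2 ≤ ρ.re ∧ ρ.re ≤ 1 ∧ |ρ.im - t| ≤ 1 / 2) :
    (∑ ρ ∈ S, zeroOrder ρ : ℝ) ≤ 36 * Real.log (|t| + 5) := by
  set c : ℂ := 2 + t * I with hc
  have hre : c.re = 2 := by simp [hc]
  have him : c.im = t := by simp [hc]
  have hlower : 1 / 4 ≤ ‖riemannZeta₁ c‖ := one_fourth_le_norm_riemannZeta₁ hre.ge
  have hc_norm : ‖c‖ ≤ 2 + |t| := (norm_add_le _ _).trans (by simp)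
  have hupper (z : ℂ) (hz : z ∈ Metric.sphere c (9 / 5)) :
      ‖riemannZeta₁ z‖ ≤ 6 * (5 + |t|) ^ 2 := by
    rw [mem_sphere_iff_norm] at hz
    have hre_sub := (abs_le.1 (hz ▸ Complex.abs_re_le_norm (z - c))).1
    rw [Complex.sub_re, hre] at hre_sub
    have hz_norm : 1 + ‖z‖ ≤ 5 + |t| := by linarith [norm_sub_norm_le z c]
    refine (norm_riemannZeta₁_le (by linarith)).trans ?_
    gcongr 6 * ?_ ^ 2
  have hball (ρ : ℂ) (hρ : ρ ∈ S) : ‖ρ - c‖ ≤ 8 / 5 := by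
    obtain ⟨hleft, hright, hheight⟩ := hS ρ hρ
    have hsq : (ρ.im - t) ^ 2 ≤ (1 / 2) ^ 2 := sq_le_sq' (abs_le.1 hheight).1 (abs_le.1 hheight).2
    rw [Complex.norm_def, Real.sqrt_le_left (by norm_num), Complex.normSq_apply, Complex.sub_re,
      Complex.sub_im, hre, him]
    nlinarith
  have hjensen := sum_analyticOrderNatAt_le differentiable_riemannZeta₁
    (norm_pos_iff.1 (by linarith)) (by norm_num) (by norm_num)
    (by nlinarith [abs_nonneg t]) hupper hball
  refine hjensen.trans ?_
  have hlog : 1 / 9 ≤ Real.log (9 / 5 / (8 / 5)) :=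
    le_trans (by norm_num) (Real.one_sub_inv_le_log_of_pos (by norm_num))
  rw [div_le_iff₀ (by linarith)]
  have hquot : Real.log (6 * (5 + |t|) ^ 2 / ‖riemannZeta₁ c‖) ≤ 4 * Real.log (|t| + 5) := by
    rw [← Real.log_rpow (by positivity)]
    refine Real.log_le_log (by positivity) ((div_le_iff₀ (by linarith)).2 ?_)
    norm_cast
    have hsq : 25 ≤ (|t| + 5) ^ 2 := by nlinarith [abs_nonneg t]
    calc 6 * (5 + |t|) ^ 2 ≤ 25 * (|t| + 5) ^ 2 * (1 / 4) := by nlinarith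
      _ ≤ (|t| + 5) ^ 2 * (|t| + 5) ^ 2 * ‖riemannZeta₁ c‖ := by gcongr
      _ = (|t| + 5) ^ 4 * ‖riemannZeta₁ c‖ := by ring
  have := Real.log_nonneg (show 1 ≤ |t| + 5 by linarith [abs_nonneg t])
  nlinarith

lemma sum_zeroOrder_le_of_abs_im_sub_le
    (hS : ∀ ρ ∈ S, 0 < ρ.re ∧ ρ.re < 1 ∧ |ρ.im - t| ≤ 1 / 2) :
    (∑ ρ ∈ S, zeroOrder ρ : ℝ) ≤ 72 * Real.log (|t| + 5) := by
  classical
  have hright : (∑ ρ ∈ S with 1 / 2 ≤ ρ.re, zeroOrder ρ : ℝ) ≤ 36 * Real.log (|t| + 5) := by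
    refine sum_zeroOrder_le_of_half_le_re fun ρ hρ ↦ ?_
    obtain ⟨hmem, hhalf⟩ := mem_filter.1 hρ
    exact ⟨hhalf, (hS ρ hmem).2.1.le, (hS ρ hmem).2.2⟩
  have hreflected : (∑ ρ ∈ {ρ ∈ S | ¬ 1 / 2 ≤ ρ.re}.image (1 - ·), zeroOrder ρ : ℝ) ≤
      36 * Real.log (|-t| + 5) := by
    refine sum_zeroOrder_le_of_half_le_re fun ρ' hρ' ↦ ?_
    obtain ⟨ρ, hρ, rfl⟩ := mem_image.1 hρ'
    obtain ⟨hmem, hhalf⟩ := mem_filter.1 hρ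
    obtain ⟨hpos, -, hheight⟩ := hS ρ hmem
    simp only [Complex.sub_re, Complex.one_re, Complex.sub_im, Complex.one_im]
    refine ⟨by linarith, by linarith, ?_⟩
    rwa [zero_sub, sub_neg_eq_add, neg_add_eq_sub, abs_sub_comm]
  have hleft : (∑ ρ ∈ S with ¬ 1 / 2 ≤ ρ.re, zeroOrder ρ : ℝ) ≤ 36 * Real.log (|t| + 5) := by
    rw [sum_image (fun _ _ _ _ h ↦ by simpa using h), abs_neg] at hreflected
    refine (sum_congr rfl fun ρ hρ ↦ ?_).trans_le hreflected
    obtain ⟨hpos, hlt, -⟩ := hS ρ (mem_filter.1 hρ).1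
    rw [zeroOrder_one_sub hpos hlt]
  linarith [sum_filter_add_sum_filter_not S (fun ρ : ℂ ↦ 1 / 2 ≤ ρ.re) fun ρ ↦ (zeroOrder ρ : ℝ)]

lemma sum_zeroOrder_le_of_abs_abs_im_sub_le
    (hS : ∀ ρ ∈ S, 0 < ρ.re ∧ ρ.re < 1 ∧ |(|ρ.im|) - t| ≤ 1 / 2) :
    (∑ ρ ∈ S, zeroOrder ρ : ℝ) ≤ 144 * Real.log (|t| + 5) := by
  classical
  have hupper : (∑ ρ ∈ S with 0 ≤ ρ.im, zeroOrder ρ : ℝ) ≤ 72 * Real.log (|t| + 5) := by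
    refine sum_zeroOrder_le_of_abs_im_sub_le fun ρ hρ ↦ ?_
    obtain ⟨hmem, him⟩ := mem_filter.1 hρ
    obtain ⟨hpos, hlt, hheight⟩ := hS ρ hmem
    exact ⟨hpos, hlt, by rwa [abs_of_nonneg him] at hheight⟩
  have hlower : (∑ ρ ∈ S with ¬ 0 ≤ ρ.im, zeroOrder ρ : ℝ) ≤ 72 * Real.log (|-t| + 5) := by
    refine sum_zeroOrder_le_of_abs_im_sub_le fun ρ hρ ↦ ?_
    obtain ⟨hmem, him⟩ := mem_filter.1 hρ
    obtain ⟨hpos, hlt, hheight⟩ := hS ρ hmem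
    refine ⟨hpos, hlt, ?_⟩
    rwa [abs_of_neg (not_le.1 him), abs_sub_comm, sub_neg_eq_add, add_comm, ← sub_neg_eq_add]
      at hheight
  rw [abs_neg] at hlower
  linarith [sum_filter_add_sum_filter_not S (fun ρ : ℂ ↦ 0 ≤ ρ.im) fun ρ ↦ (zeroOrder ρ : ℝ)]

end LocalCount

/-! ### Truncated Perron integrals -/

section PerronIntegral

/-- The truncated Perron integral of `exp (l * s) / (s - a)` over the segment from `2 - i T` to
`2 + i T`, divided by `i`. -/
noncomputable def perronIntegral (l T : ℝ) (a : ℂ) : ℂ :=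
  ∫ y in -T..T, Complex.exp (l * (2 + y * I)) / (2 + y * I - a)

lemma two_add_mul_I_sub_ne_zero {a : ℂ} (ha : a.re < 2) (y : ℝ) : (2 + y * I - a : ℂ) ≠ 0 := by
  intro h
  have hre := congrArg Complex.re h
  simp only [Complex.sub_re, Complex.add_re, Complex.re_ofNat, Complex.re_ofReal_mul, Complex.I_re,
    mul_zero, add_zero, Complex.zero_re] at hre
  linarith

lemma two_add_mul_I_ne_zero (y : ℝ) : (2 + y * I : ℂ) ≠ 0 := by
  simpa only [sub_zero] using two_add_mul_I_sub_ne_zero (a := 0) (by simp) y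

lemma two_sub_re_le_norm (a : ℂ) (y : ℝ) : 2 - a.re ≤ ‖(2 + y * I - a : ℂ)‖ := by
  simpa using Complex.re_le_norm (2 + y * I - a)

lemma continuous_exp_div_sub (l : ℝ) {a : ℂ} (ha : a.re < 2) :
    Continuous fun y : ℝ ↦ Complex.exp (l * (2 + y * I)) / (2 + y * I - a) :=
  .div (by fun_prop) (by fun_prop) (two_add_mul_I_sub_ne_zero ha)

lemma norm_exp_mul_two_add_mul_I (l y : ℝ) :
    ‖Complex.exp (l * (2 + y * I))‖ = Real.exp (2 * l) := by
  simp [Complex.norm_exp, mul_comm]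

lemma perronIntegral_eq (l T : ℝ) (a : ℂ) :
    perronIntegral l T a = Complex.exp (l * a) * ∫ y in (-T - a.im)..(T - a.im),
      Complex.exp (l * ((2 - a.re : ℝ) + y * I)) / ((2 - a.re : ℝ) + y * I) := by
  rw [← intervalIntegral.integral_comp_sub_right fun y : ℝ ↦
      Complex.exp (l * ((2 - a.re : ℝ) + y * I)) / ((2 - a.re : ℝ) + y * I),
    ← intervalIntegral.integral_const_mul, perronIntegral]
  refine intervalIntegral.integral_congr fun y _ ↦ ?_
  have hshift : ((2 - a.re : ℝ) : ℂ) + ((y - a.im : ℝ) : ℂ) * I = 2 + y * I - a := by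
    apply Complex.ext <;> simp
  simp only [hshift]
  rw [mul_div_assoc', ← Complex.exp_add]
  ring_nf

variable {l T : ℝ} {a : ℂ}

lemma norm_perronIntegral_sub_le (hl : 0 < l) (hT : 0 < T) (ha : a.re < 2) (hne : |a.im| ≠ T) :
    ‖perronIntegral l T a - (if |a.im| < T then 2 * π else 0 : ℝ) * Complex.exp (l * a)‖ ≤
      2 * Real.exp (2 * l) / l / |(|a.im|) - T| := by
  have hu : -T - a.im ≠ 0 := fun h ↦ hne <| by
    rw [show a.im = -T by linarith, abs_neg, abs_of_pos hT]
  have hv : T - a.im ≠ 0 := fun h ↦ hne <| by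
    rw [show a.im = T by linarith, abs_of_pos hT]
  have hkernel := norm_integral_exp_div_sub_le (b := 2 - a.re) hl (by linarith) hu hv (by linarith)
  have hiff : (-T - a.im < 0 ∧ 0 < T - a.im) ↔ |a.im| < T := by
    rw [abs_lt]
    constructor <;> rintro ⟨h₁, h₂⟩ <;> constructor <;> linarith
  simp only [hiff] at hkernel
  have : 0 < |(|a.im|) - T| := abs_pos.2 (sub_ne_zero.2 hne)
  have hdu : |(|a.im|) - T| ≤ |-T - a.im| := by
    simpa only [abs_neg, abs_of_pos hT, abs_sub_comm a.im] using abs_abs_sub_abs_le a.im (-T)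
  have hdv : |(|a.im|) - T| ≤ |T - a.im| := by
    simpa only [abs_of_pos hT, abs_sub_comm a.im] using abs_abs_sub_abs_le a.im T
  rw [perronIntegral_eq, mul_comm (Complex.ofReal (ite _ _ _)), ← mul_sub, norm_mul,
    Complex.norm_exp, Complex.re_ofReal_mul]
  calc Real.exp (l * a.re) * ‖_‖
      ≤ Real.exp (l * a.re) *
          (Real.exp (l * (2 - a.re)) / l * (1 / |-T - a.im| + 1 / |T - a.im|)) := by gcongr
    _ = Real.exp (2 * l) / l * (1 / |-T - a.im| + 1 / |T - a.im|) := by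
        rw [show 2 * l = l * a.re + l * (2 - a.re) by ring, Real.exp_add]
        ring
    _ ≤ Real.exp (2 * l) / l * (1 / |(|a.im|) - T| + 1 / |(|a.im|) - T|) := by gcongr
    _ = 2 * Real.exp (2 * l) / l / |(|a.im|) - T| := by ring

lemma tendsto_perronIntegral (hl : 0 < l) (ha : a.re < 2) :
    Tendsto (fun T ↦ perronIntegral l T a) atTop (𝓝 (2 * π * Complex.exp (l * a))) := by
  have hbound : Tendsto (fun T : ℝ ↦ 2 * Real.exp (2 * l) / l / (T - |a.im|)) atTop (𝓝 0) :=
    tendsto_const_nhds.div_atTop (tendsto_atTop_add_const_right _ _ tendsto_id)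
  refine tendsto_iff_norm_sub_tendsto_zero.2
    (squeeze_zero' (Eventually.of_forall fun _ ↦ norm_nonneg _) ?_ hbound)
  filter_upwards [eventually_gt_atTop |a.im|] with T hT
  have hsub := norm_perronIntegral_sub_le hl ((abs_nonneg _).trans_lt hT) ha hT.ne
  rw [if_pos hT, abs_sub_comm, abs_of_pos (sub_pos.2 hT)] at hsub
  exact_mod_cast hsub

lemma norm_perronIntegral_le_of_forall_le {c : ℝ} (hT : 0 ≤ T) (hc : 0 < c)
    (h : ∀ y : ℝ, c ≤ ‖(2 + y * I - a : ℂ)‖) :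
    ‖perronIntegral l T a‖ ≤ 2 * T * (Real.exp (2 * l) / c) := by
  refine (intervalIntegral.norm_integral_le_of_norm_le_const
    (C := Real.exp (2 * l) / c) fun y _ ↦ ?_).trans_eq ?_
  · rw [norm_div, norm_exp_mul_two_add_mul_I]
    exact div_le_div_of_nonneg_left (Real.exp_pos _).le hc (h y)
  · rw [abs_of_nonneg (by linarith)]
    ring

lemma norm_perronIntegral_add_two_sub_le (ha : a.re ≤ 1) :
    ‖perronIntegral l (T + 2) a - perronIntegral l T a‖ ≤ 4 * Real.exp (2 * l) := by
  set f : ℝ → ℂ := fun y ↦ Complex.exp (l * (2 + y * I)) / (2 + y * I - a)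
  have hf (u v : ℝ) : IntervalIntegrable f volume u v :=
    (continuous_exp_div_sub l (by linarith)).intervalIntegrable u v
  have hnorm (y : ℝ) : ‖f y‖ ≤ Real.exp (2 * l) := by
    rw [norm_div, norm_exp_mul_two_add_mul_I]
    exact div_le_self (Real.exp_pos _).le (by linarith [two_sub_re_le_norm a y])
  have hsplit : perronIntegral l (T + 2) a - perronIntegral l T a =
      (∫ y in -(T + 2)..-T, f y) + ∫ y in T..T + 2, f y := by
    rw [perronIntegral, perronIntegral,
      ← intervalIntegral.integral_add_adjacent_intervals (hf _ (-T)) (hf _ _),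
      ← intervalIntegral.integral_add_adjacent_intervals (hf (-T) T) (hf _ _)]
    ring
  have hlower := intervalIntegral.norm_integral_le_of_norm_le_const (a := -(T + 2)) (b := -T)
    fun y _ ↦ hnorm y
  have hupper := intervalIntegral.norm_integral_le_of_norm_le_const (a := T) (b := T + 2)
    fun y _ ↦ hnorm y
  rw [show -T - -(T + 2) = 2 by ring, abs_two] at hlower
  rw [add_sub_cancel_left, abs_two] at hupper
  rw [hsplit]
  linarith [norm_add_le (∫ y in -(T + 2)..-T, f y) (∫ y in T..T + 2, f y)]

lemma norm_perronIntegral_le_of_one_le_abs (hl : 0 < l) (hT : 0 < T) (ha : a.re ≤ 1)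
    (hd : 1 ≤ |(|a.im|) - T|) :
    ‖perronIntegral l T a‖ ≤ 2 * π * Real.exp l + 2 * Real.exp (2 * l) / l := by
  have hne : |a.im| ≠ T := fun h ↦ by norm_num [h] at hd
  set m : ℝ := if |a.im| < T then 2 * π else 0 with hm
  have hm0 : 0 ≤ m := by positivity
  have hm1 : m ≤ 2 * π := by
    rw [hm]
    split_ifs
    exacts [le_rfl, by positivity]
  have hmain : ‖(m : ℂ) * Complex.exp (l * a)‖ ≤ 2 * π * Real.exp l := by
    rw [norm_mul, Complex.norm_real, Complex.norm_exp, Complex.re_ofReal_mul,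
      Real.norm_of_nonneg hm0]
    gcongr
    exact mul_le_of_le_one_right hl.le ha
  have hsub : ‖perronIntegral l T a - m * Complex.exp (l * a)‖ ≤ 2 * Real.exp (2 * l) / l :=
    (norm_perronIntegral_sub_le hl hT (by linarith) hne).trans (div_le_self (by positivity) hd)
  linarith [norm_le_norm_sub_add (perronIntegral l T a) (m * Complex.exp (l * a))]

lemma norm_perronIntegral_le (hl : 0 < l) (hT : 0 < T) (ha : a.re ≤ 1) :
    ‖perronIntegral l T a‖ ≤
      2 * π * Real.exp l + 2 * Real.exp (2 * l) / l + 4 * Real.exp (2 * l) := by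
  rcases le_or_gt 1 |(|a.im|) - T| with hd | hd
  · linarith [norm_perronIntegral_le_of_one_le_abs hl hT ha hd, Real.exp_pos (2 * l)]
  · have hfar : 1 ≤ |(|a.im|) - (T + 2)| :=
      le_abs.2 (.inr (by linarith [(abs_lt.1 hd).2]))
    have hshift := norm_perronIntegral_add_two_sub_le (l := l) (T := T) ha
    rw [norm_sub_rev] at hshift
    linarith [norm_perronIntegral_le_of_one_le_abs hl (by linarith) ha hfar,
      norm_le_norm_sub_add (perronIntegral l T a) (perronIntegral l (T + 2) a)]

lemma norm_perronIntegral_le_of_im_eq_zero (hl : 0 < l) (hT : 0 < T) (him : a.im = 0)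
    (hre : a.re < 0) :
    ‖perronIntegral l T a‖ ≤ 2 * Real.exp (2 * l) / l / T + 2 * π / l / ‖a‖ := by
  have hnorm : ‖a‖ = -a.re := by rw [← abs_of_neg hre, Complex.abs_re_eq_norm.2 him]
  have hpos : 0 < ‖a‖ := by linarith
  have hsub := norm_perronIntegral_sub_le hl hT (a := a) (by linarith)
    (by rw [him, abs_zero]; exact hT.ne)
  rw [him, abs_zero, if_pos hT, zero_sub, abs_neg, abs_of_pos hT] at hsub
  have hmain : ‖((2 * π : ℝ) : ℂ) * Complex.exp (l * a)‖ ≤ 2 * π / l / ‖a‖ := by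
    rw [norm_mul, Complex.norm_real, Complex.norm_exp, Real.norm_of_nonneg (by positivity),
      Complex.re_ofReal_mul, show l * a.re = -(l * ‖a‖) by rw [hnorm]; ring, Real.exp_neg,
      div_div, div_eq_mul_inv (2 * π)]
    gcongr
    linarith [Real.add_one_le_exp (l * ‖a‖)]
  linarith [norm_le_norm_sub_add (perronIntegral l T a) ((2 * π : ℝ) * Complex.exp (l * a))]

/- The estimate by absolute values is used for `T ≤ √‖a‖`, Perron's formula for `√‖a‖ ≤ T`. -/
lemma norm_perronIntegral_le_div_rpow (hl : 0 < l) (hT : 1 ≤ T) (him : a.im = 0)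
    (hre : a.re ≤ -2) :
    ‖perronIntegral l T a‖ ≤
      (2 * Real.exp (2 * l) + 2 * Real.exp (2 * l) / l + 2 * π / l) / ‖a‖ ^ (1 / 2 : ℝ) := by
  have hnorm : ‖a‖ = -a.re := by rw [← abs_of_neg (by linarith), Complex.abs_re_eq_norm.2 him]
  have hpos : 0 < ‖a‖ := by linarith
  rw [← Real.sqrt_eq_rpow]
  set q := √‖a‖
  have hsq : q * q = ‖a‖ := Real.mul_self_sqrt hpos.le
  have hq : 0 < q := Real.sqrt_pos.2 hpos
  have hq1 : 1 ≤ q := Real.one_le_sqrt.2 (by linarith)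
  rcases le_or_gt T q with hTq | hTq
  · calc ‖perronIntegral l T a‖ ≤ 2 * T * (Real.exp (2 * l) / ‖a‖) :=
          norm_perronIntegral_le_of_forall_le (by linarith) hpos fun y ↦ by
            linarith [two_sub_re_le_norm a y]
      _ ≤ 2 * q * (Real.exp (2 * l) / (q * q)) := by rw [hsq]; gcongr
      _ = 2 * Real.exp (2 * l) / q := by field_simp
      _ ≤ (2 * Real.exp (2 * l) + 2 * Real.exp (2 * l) / l + 2 * π / l) / q := by
          gcongr
          rw [add_assoc]
          exact le_add_of_nonneg_right (by positivity)
  · calc ‖perronIntegral l T a‖ ≤ 2 * Real.exp (2 * l) / l / T + 2 * π / l / ‖a‖ :=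
          norm_perronIntegral_le_of_im_eq_zero hl (by linarith) him (by linarith)
      _ ≤ 2 * Real.exp (2 * l) / l / q + 2 * π / l / q := by
          gcongr
          rw [← hsq]
          exact le_mul_of_one_le_left hq.le hq1
      _ ≤ (2 * Real.exp (2 * l) + 2 * Real.exp (2 * l) / l + 2 * π / l) / q := by
          rw [← add_div]
          gcongr
          linarith [Real.exp_pos (2 * l)]

end PerronIntegral

/-! ### The explicit formula for `ψ` -/

lemma tendsto_tsum_of_dominated_off_finset {α β E : Type*} [NormedAddCommGroup E]
    [CompleteSpace E] {l : Filter α} {f : α → β → E} {g : β → E} {b : β → ℝ} (hb : Summable b)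
    (F : Finset β) (hlim : ∀ k, Tendsto (f · k) l (𝓝 (g k)))
    (h : ∀ᶠ a in l, ∀ k ∉ F, ‖f a k‖ ≤ b k) :
    Tendsto (fun a ↦ ∑' k, f a k) l (𝓝 (∑' k, g k)) := by
  classical
  have hF : ∀ᶠ a in l, ∀ k ∈ F, ‖f a k‖ ≤ ‖g k‖ + 1 :=
    (eventually_all_finset F).2 fun k _ ↦
      (hlim k).norm.eventually_le_const (lt_add_one ‖g k‖)
  refine tendsto_tsum_of_dominated_convergence
    (bound := fun k ↦ if k ∈ F then ‖g k‖ + 1 else b k)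
    (hb.congr_cofinite ?_) hlim ?_
  · filter_upwards [F.finite_toSet.compl_mem_cofinite] with k hk
    exact (if_neg hk).symm
  · filter_upwards [h, hF] with a hoff hon k
    split_ifs with hk
    exacts [hon k hk, hoff k hk]

lemma hasSum_intervalIntegral_of_norm_le {ι E : Type*} [NormedAddCommGroup E] [NormedSpace ℝ E]
    {F : ι → ℝ → E} {f : ℝ → E} {b : ι → ℝ} {u v : ℝ} (hF : ∀ i, Continuous (F i))
    (hb : Summable b) (h : ∀ i, ∀ y ∈ Set.uIoc u v, ‖F i y‖ ≤ b i)
    (hs : ∀ y, HasSum (F · y) (f y)) :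
    HasSum (fun i ↦ ∫ y in u..v, F i y) (∫ y in u..v, f y) := by
  set s := Function.support b
  have : Countable s := hb.countable_support
  have hzero (i : ι) (hi : i ∉ s) (y : ℝ) (hy : y ∈ Set.uIoc u v) : F i y = 0 :=
    norm_le_zero_iff.1 (Function.notMem_support.1 hi ▸ h i y hy)
  have hsum : HasSum (fun i : s ↦ ∫ y in u..v, F i y) (∫ y in u..v, f y) := by
    refine intervalIntegral.hasSum_integral_of_dominated_convergence (fun i _ ↦ b i)
      (fun i ↦ (hF i).aestronglyMeasurable) (fun i ↦ .of_forall (h i))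
      (.of_forall fun _ _ ↦ hb.subtype s) intervalIntegrable_const (.of_forall fun y hy ↦ ?_)
    exact (hasSum_subtype_iff_of_support_subset
      (Function.support_subset_iff'.2 fun i hi ↦ hzero i hi y hy)).2 (hs y)
  refine (hasSum_subtype_iff_of_support_subset
    (Function.support_subset_iff'.2 fun i hi ↦ ?_)).1 hsum
  rw [intervalIntegral.integral_congr_ae (g := fun _ ↦ 0) (.of_forall (hzero i hi)),
    intervalIntegral.integral_zero]

lemma norm_perronIntegral_zero_le_of_neg {r T : ℝ} (hr : r < 0) (hT : 0 < T) :
    ‖perronIntegral r T 0‖ ≤ Real.exp (2 * r) / |r| * (2 / T) := by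
  have h := norm_integral_exp_div_le hr (b := 2) (by norm_num) (neg_ne_zero.2 hT.ne') hT.ne'
  rw [abs_neg, abs_of_pos hT, Complex.ofReal_ofNat] at h
  simp only [perronIntegral, sub_zero]
  exact h.trans_eq (by rw [mul_comm 2 r]; ring)

lemma integral_four_div_four_add_sq (T : ℝ) :
    ∫ y in -T..T, 4 / (4 + y ^ 2) = 4 * Real.arctan (T / 2) := by
  rw [intervalIntegral.integral_eq_sub_of_hasDerivAt (f := fun y ↦ 2 * Real.arctan (y / 2))]
  · rw [neg_div, Real.arctan_neg]
    ring
  · intro y _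
    convert! (((hasDerivAt_id y).div_const 2).arctan).const_mul 2 using 1
    simp only [id]
    field_simp
    ring
  · exact (Continuous.div (by fun_prop) (by fun_prop) fun y ↦ by positivity).intervalIntegrable _ _

lemma perronIntegral_zero_zero (T : ℝ) :
    perronIntegral 0 T 0 = ((2 * Real.arctan (T / 2) : ℝ) : ℂ) := by
  have hcont : Continuous fun y : ℝ ↦ 1 / (2 + y * I : ℂ) :=
    .div (by fun_prop) (by fun_prop) two_add_mul_I_ne_zero
  have heq : perronIntegral 0 T 0 = ∫ y in -T..T, 1 / (2 + y * I : ℂ) := by simp [perronIntegral]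
  have hneg : ∫ y in -T..T, 1 / (2 + (-y : ℝ) * I : ℂ) = perronIntegral 0 T 0 := by
    rw [intervalIntegral.integral_comp_neg fun y : ℝ ↦ 1 / (2 + y * I : ℂ), neg_neg, heq]
  have hsum (y : ℝ) :
      1 / (2 + y * I : ℂ) + 1 / (2 + (-y : ℝ) * I) = ((4 / (4 + y ^ 2) : ℝ) : ℂ) := by
    rw [div_add_div _ _ (two_add_mul_I_ne_zero y) (two_add_mul_I_ne_zero (-y))]
    push_cast
    congr 1
    · ring
    · linear_combination (-(y : ℂ) ^ 2) * Complex.I_sq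
  have htwo : perronIntegral 0 T 0 + perronIntegral 0 T 0 = (4 * Real.arctan (T / 2) : ℝ) := by
    nth_rw 2 [← hneg]
    have hcont' : Continuous fun y : ℝ ↦ 1 / (2 + (-y : ℝ) * I : ℂ) := hcont.comp continuous_neg
    rw [heq, ← intervalIntegral.integral_add (hcont.intervalIntegrable _ _)
      (hcont'.intervalIntegrable _ _)]
    simp only [hsum]
    rw [intervalIntegral.integral_ofReal, integral_four_div_four_add_sq]
  push_cast at htwo ⊢
  linear_combination (1 / 2) * htwo

lemma tendsto_perronIntegral_zero (r : ℝ) :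
    Tendsto (fun T ↦ perronIntegral r T 0) atTop (𝓝 ((π * (1 + Real.sign r) : ℝ) : ℂ)) := by
  rcases lt_trichotomy r 0 with hr | rfl | hr
  · rw [Real.sign_of_neg hr, add_neg_cancel, mul_zero, Complex.ofReal_zero]
    have hbound : Tendsto (fun T : ℝ ↦ Real.exp (2 * r) / |r| * (2 / T)) atTop (𝓝 0) := by
      simpa using (tendsto_const_nhds.div_atTop tendsto_id).const_mul (Real.exp (2 * r) / |r|)
    refine squeeze_zero_norm' ?_ hbound
    filter_upwards [eventually_gt_atTop 0] with T hT
    exact norm_perronIntegral_zero_le_of_neg hr hT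
  · simp only [perronIntegral_zero_zero]
    have harctan : Tendsto (fun T : ℝ ↦ Real.arctan (T / 2)) atTop (𝓝 (π / 2)) :=
      (tendsto_nhds_of_tendsto_nhdsWithin Real.tendsto_arctan_atTop).comp
        (tendsto_id.atTop_div_const (by norm_num))
    rw [Real.sign_zero, show π * (1 + 0) = 2 * (π / 2) by ring]
    exact (Complex.continuous_ofReal.tendsto _).comp (harctan.const_mul 2)
  · rw [Real.sign_of_pos hr, show π * (1 + 1) = 2 * π by ring]
    simpa using tendsto_perronIntegral hr (a := 0) (by simp)

lemma summable_vonMangoldt_div_sq : Summable fun n : ℕ ↦ vonMangoldt n / (n : ℝ) ^ 2 := by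
  refine (ArithmeticFunction.LSeriesSummable_vonMangoldt (s := 2) (by norm_num)).norm.congr
    fun n ↦ ?_
  rcases n.eq_zero_or_pos with rfl | hn
  · simp
  · rw [LSeries.term_of_ne_zero hn.ne', norm_div, Complex.norm_real,
      Real.norm_of_nonneg ArithmeticFunction.vonMangoldt_nonneg,
      Complex.norm_natCast_cpow_of_pos hn]
    norm_num

lemma exp_two_mul_sub_log (l : ℝ) {x : ℝ} (hx : 0 < x) :
    Real.exp (2 * (l - Real.log x)) = Real.exp (2 * l) / x ^ 2 := by
  rw [mul_sub, Real.exp_sub, two_mul (Real.log x), Real.exp_add, Real.exp_log hx, sq]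

lemma hasSum_vonMangoldt_mul_perronIntegral (l T : ℝ) :
    HasSum (fun n : ℕ ↦ (vonMangoldt n : ℂ) * perronIntegral (l - Real.log n) T 0)
      (∫ y in -T..T, Complex.exp (l * (2 + y * I)) / (2 + y * I) *
        LSeries (fun n ↦ (vonMangoldt n : ℂ)) (2 + y * I)) := by
  have hzero : (0 : ℂ).re < 2 := by simp
  simp only [perronIntegral, ← intervalIntegral.integral_const_mul]
  refine hasSum_intervalIntegral_of_norm_le
    (fun n ↦ (continuous_exp_div_sub (l - Real.log n : ℝ) hzero).const_mul _)
    (summable_vonMangoldt_div_sq.mul_left (Real.exp (2 * l))) (fun n y _ ↦ ?_) fun y ↦ ?_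
  · rcases n.eq_zero_or_pos with rfl | hn
    · simp
    have hone : 1 ≤ ‖(2 + y * I - 0 : ℂ)‖ := by
      linarith [two_sub_re_le_norm 0 y, Complex.zero_re]
    rw [norm_mul, Complex.norm_real, Real.norm_of_nonneg ArithmeticFunction.vonMangoldt_nonneg,
      norm_div, norm_exp_mul_two_add_mul_I, exp_two_mul_sub_log l (Nat.cast_pos.2 hn)]
    calc vonMangoldt n * (Real.exp (2 * l) / (n : ℝ) ^ 2 / ‖(2 + y * I - 0 : ℂ)‖)
        ≤ vonMangoldt n * (Real.exp (2 * l) / (n : ℝ) ^ 2) :=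
          mul_le_mul_of_nonneg_left (div_le_self (by positivity) hone)
            ArithmeticFunction.vonMangoldt_nonneg
      _ = Real.exp (2 * l) * (vonMangoldt n / (n : ℝ) ^ 2) := by ring
  · have hsum := (ArithmeticFunction.LSeriesSummable_vonMangoldt
      (s := 2 + y * I) (by simp)).LSeriesHasSum.mul_left
        (Complex.exp (l * (2 + y * I)) / (2 + y * I))
    refine hsum.congr_fun fun n ↦ ?_
    rcases n.eq_zero_or_pos with rfl | hn
    · simp
    rw [LSeries.term_of_ne_zero hn.ne', Complex.cpow_def_of_ne_zero (Nat.cast_ne_zero.2 hn.ne'),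
      sub_zero, ← Complex.natCast_log, Complex.ofReal_sub, sub_mul, Complex.exp_sub]
    ring

lemma tendsto_tsum_vonMangoldt_mul_perronIntegral (l : ℝ) :
    Tendsto (fun T ↦ ∑' n : ℕ, (vonMangoldt n : ℂ) * perronIntegral (l - Real.log n) T 0) atTop
      (𝓝 (∑' n : ℕ, (vonMangoldt n : ℂ) * ((π * (1 + Real.sign (l - Real.log n)) : ℝ) : ℂ))) := by
  refine tendsto_tsum_of_dominated_off_finset
    (summable_vonMangoldt_div_sq.mul_left (2 * Real.exp (2 * l) / Real.log 2))
    (range ⌈2 * Real.exp l⌉₊) (fun n ↦ (tendsto_perronIntegral_zero _).const_mul _) ?_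
  filter_upwards [eventually_ge_atTop 1] with T hT n hn
  have hle : 2 * Real.exp l ≤ n := Nat.ceil_le.1 (not_lt.1 (mt mem_range.2 hn))
  have hpos : (0 : ℝ) < n := lt_of_lt_of_le (by positivity) hle
  have hlog : Real.log 2 + l ≤ Real.log n := by
    rw [← Real.log_exp l, ← Real.log_mul (by norm_num) (Real.exp_ne_zero _)]
    exact Real.log_le_log (by positivity) (by simpa using hle)
  have hlog2 : 0 < Real.log 2 := Real.log_pos (by norm_num)
  have hneg : l - Real.log n < 0 := by linarith
  have hdist : Real.log 2 ≤ |l - Real.log n| := by rw [abs_of_neg hneg]; linarith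
  rw [norm_mul, Complex.norm_real, Real.norm_of_nonneg ArithmeticFunction.vonMangoldt_nonneg]
  calc vonMangoldt n * ‖perronIntegral (l - Real.log n) T 0‖
      ≤ vonMangoldt n * (Real.exp (2 * l) / (n : ℝ) ^ 2 / Real.log 2 * 2) := by
        refine mul_le_mul_of_nonneg_left ?_ ArithmeticFunction.vonMangoldt_nonneg
        rw [← exp_two_mul_sub_log l hpos]
        refine (norm_perronIntegral_zero_le_of_neg hneg (by linarith)).trans ?_
        gcongr
        exact div_le_self zero_le_two hT
    _ = 2 * Real.exp (2 * l) / Real.log 2 * (vonMangoldt n / (n : ℝ) ^ 2) := by ring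

lemma ne_zero_of_zeroOrder_ne_zero {ρ : ℂ} (h : zeroOrder ρ ≠ 0) : ρ ≠ 0 := by
  rintro rfl
  exact riemannZeta₁_zero_ne_zero (zeroOrder_ne_zero_iff.1 h)

lemma re_lt_one_of_zeroOrder_ne_zero {ρ : ℂ} (h : zeroOrder ρ ≠ 0) : ρ.re < 1 :=
  not_le.1 fun h1 ↦ riemannZeta₁_ne_zero_of_one_le_re h1 (zeroOrder_ne_zero_iff.1 h)

lemma norm_div_le_norm_two_add_mul_I_sub {a : ℂ} (ha : a.re ≤ 1) {y T : ℝ} (hy : |y| ≤ T) :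
    ‖a‖ / (2 * (2 + T)) ≤ ‖(2 + y * I - a : ℂ)‖ := by
  have hT : 0 ≤ T := (abs_nonneg y).trans hy
  have hone : 1 ≤ ‖(2 + y * I - a : ℂ)‖ := by linarith [two_sub_re_le_norm a y]
  have hline : ‖(2 + y * I : ℂ)‖ ≤ 2 + T :=
    (norm_add_le _ _).trans (by simpa using hy)
  have htri := norm_sub_norm_le a (2 + y * I)
  rw [norm_sub_rev] at htri
  rw [div_le_iff₀ (by positivity)]
  nlinarith

lemma hasSum_zeroOrder_div_mul_perronIntegral (l : ℝ) {T : ℝ} (hT : 0 ≤ T) :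
    HasSum (fun ρ : ℂ ↦ (zeroOrder ρ : ℂ) / ρ * perronIntegral l T ρ)
      (∫ y in -T..T, Complex.exp (l * (2 + y * I)) / (2 + y * I) *
        (logDeriv riemannZeta₁ (2 + y * I) - (-1 + Real.log (2 * π)))) := by
  simp only [perronIntegral, ← intervalIntegral.integral_const_mul]
  refine hasSum_intervalIntegral_of_norm_le (fun ρ ↦ ?_)
    (summable_zeroOrder_div_sq.mul_left (2 * (2 + T) * Real.exp (2 * l))) (fun ρ y hy ↦ ?_)
    fun y ↦ ?_
  · rcases eq_or_ne (zeroOrder ρ) 0 with hρ | hρ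
    · simpa only [hρ, Nat.cast_zero, zero_div, zero_mul] using continuous_const
    · exact (continuous_exp_div_sub l
        ((re_lt_one_of_zeroOrder_ne_zero hρ).trans one_lt_two)).const_mul _
  · rcases eq_or_ne (zeroOrder ρ) 0 with hρ | hρ
    · simp [hρ]
    have hpos : 0 < ‖ρ‖ := norm_pos_iff.2 (ne_zero_of_zeroOrder_ne_zero hρ)
    rw [norm_mul, norm_div, norm_div, norm_exp_mul_two_add_mul_I, Complex.norm_natCast]
    calc (zeroOrder ρ : ℝ) / ‖ρ‖ * (Real.exp (2 * l) / ‖(2 + y * I - ρ : ℂ)‖)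
        ≤ (zeroOrder ρ : ℝ) / ‖ρ‖ * (Real.exp (2 * l) / (‖ρ‖ / (2 * (2 + T)))) := by
          gcongr
          refine norm_div_le_norm_two_add_mul_I_sub (re_lt_one_of_zeroOrder_ne_zero hρ).le ?_
          rw [Set.uIoc_of_le (by linarith)] at hy
          exact abs_le.2 ⟨hy.1.le, hy.2⟩
      _ = 2 * (2 + T) * Real.exp (2 * l) * (zeroOrder ρ / ‖ρ‖ ^ 2) := by field_simp
  · refine ((hasSum_logDeriv_riemannZeta₁ (riemannZeta₁_ne_zero_of_one_le_re
      (by simp))).mul_left (Complex.exp (l * (2 + y * I)) / (2 + y * I))).congr_fun fun ρ ↦ ?_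
    rcases eq_or_ne (zeroOrder ρ) 0 with hρ | hρ
    · simp [hρ]
    have hsub : (2 + y * I - ρ : ℂ) ≠ 0 :=
      two_add_mul_I_sub_ne_zero ((re_lt_one_of_zeroOrder_ne_zero hρ).trans one_lt_two) y
    have hline := two_add_mul_I_ne_zero y
    field_simp [ne_zero_of_zeroOrder_ne_zero hρ]
    ring

lemma logDeriv_riemannZeta₁_eq_sub_LSeries {s : ℂ} (hs : 1 < s.re) :
    logDeriv riemannZeta₁ s = 1 / (s - 1) - LSeries (fun n ↦ (vonMangoldt n : ℂ)) s := by
  have hne : s ≠ 1 := by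
    rintro rfl
    simp at hs
  have heq : riemannZeta₁ =ᶠ[𝓝 s] fun z ↦ (z - 1) * riemannZeta z := by
    filter_upwards [isOpen_ne.mem_nhds hne] with z hz
    exact riemannZeta₁_eq_mul hz
  have hsub : logDeriv (fun z : ℂ ↦ z - 1) s = 1 / (s - 1) := by simp [logDeriv_apply]
  rw [(logDeriv_congr_nhds heq).eq_of_nhds, logDeriv_mul (f := fun z ↦ z - 1) s (sub_ne_zero.2 hne)
    (riemannZeta_ne_zero_of_one_le_re hs.le) (by fun_prop) (differentiableAt_riemannZeta hne),
    ArithmeticFunction.LSeries_vonMangoldt_eq_deriv_riemannZeta_div hs, hsub, logDeriv_apply]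
  ring

lemma continuous_logDeriv_riemannZeta₁ :
    Continuous fun y : ℝ ↦ logDeriv riemannZeta₁ (2 + y * I) := by
  have hderiv : Continuous (deriv riemannZeta₁) :=
    differentiable_riemannZeta₁.contDiff.continuous_deriv le_rfl
  exact (hderiv.comp (by fun_prop)).div (differentiable_riemannZeta₁.continuous.comp (by fun_prop))
    fun y ↦ riemannZeta₁_ne_zero_of_one_le_re (by simp)

lemma hasSum_perronIntegral_zeros (l : ℝ) {T : ℝ} (hT : 0 ≤ T) :
    HasSum (fun ρ : ℂ ↦ (zeroOrder ρ : ℂ) / ρ * perronIntegral l T ρ)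
      (perronIntegral l T 1 - Real.log (2 * π) * perronIntegral l T 0 -
        ∑' n : ℕ, (vonMangoldt n : ℂ) * perronIntegral (l - Real.log n) T 0) := by
  convert! hasSum_zeroOrder_div_mul_perronIntegral l hT using 1
  set c : ℂ := (Real.log (2 * π) : ℂ)
  have hone := continuous_exp_div_sub l (a := 1) (by simp)
  have hzero : Continuous fun y : ℝ ↦ c * (Complex.exp (l * (2 + y * I)) / (2 + y * I - 0)) :=
    (continuous_exp_div_sub l (by simp)).const_mul c
  have hdiff : Continuous fun y : ℝ ↦ Complex.exp (l * (2 + y * I)) / (2 + y * I - 1) -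
      c * (Complex.exp (l * (2 + y * I)) / (2 + y * I - 0)) := hone.sub hzero
  have hexp : Continuous fun y : ℝ ↦ Complex.exp (l * (2 + y * I)) / (2 + y * I) := by
    simpa only [sub_zero] using continuous_exp_div_sub l (a := 0) (by simp)
  have hlog : Continuous fun y : ℝ ↦ Complex.exp (l * (2 + y * I)) / (2 + y * I) *
      (logDeriv riemannZeta₁ (2 + y * I) - (-1 + c)) :=
    hexp.mul (continuous_logDeriv_riemannZeta₁.sub continuous_const)
  have hsplit (y : ℝ) : Complex.exp (l * (2 + y * I)) / (2 + y * I) *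
        LSeries (fun n ↦ (vonMangoldt n : ℂ)) (2 + y * I) =
      Complex.exp (l * (2 + y * I)) / (2 + y * I - 1) -
        c * (Complex.exp (l * (2 + y * I)) / (2 + y * I - 0)) -
      Complex.exp (l * (2 + y * I)) / (2 + y * I) *
        (logDeriv riemannZeta₁ (2 + y * I) - (-1 + c)) := by
    have hline := two_add_mul_I_ne_zero y
    have hsub : (2 + y * I - 1 : ℂ) ≠ 0 := two_add_mul_I_sub_ne_zero (by simp) y
    rw [logDeriv_riemannZeta₁_eq_sub_LSeries (by simp), sub_zero]
    field_simp
    ring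
  rw [(hasSum_vonMangoldt_mul_perronIntegral l T).tsum_eq]
  simp only [hsplit]
  rw [intervalIntegral.integral_sub (hdiff.intervalIntegrable _ _) (hlog.intervalIntegrable _ _),
    intervalIntegral.integral_sub (hone.intervalIntegrable _ _) (hzero.intervalIntegrable _ _),
    intervalIntegral.integral_const_mul]
  exact sub_sub_cancel _ _

/-- The normalized Chebyshev function `ψ₀`, the mean of the one-sided limits of `ψ`: the summand
`n = x` is counted with weight `1 / 2`. -/
noncomputable def chebyshevPsi₀ (x : ℝ) : ℝ :=
  ∑' n : ℕ, vonMangoldt n * ((1 + Real.sign (x - n)) / 2)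

lemma chebyshevPsi₀_le_psi {x : ℝ} (hx : 0 ≤ x) : chebyshevPsi₀ x ≤ Chebyshev.psi x := by
  have hzero (n : ℕ) (hn : n ∉ Finset.Ioc 0 ⌊x⌋₊) :
      vonMangoldt n * ((1 + Real.sign (x - n)) / 2) = 0 := by
    rcases n.eq_zero_or_pos with rfl | hpos
    · simp
    have hlt : x < n := (Nat.floor_lt hx).1 (not_le.1 fun hle ↦ hn (Finset.mem_Ioc.2 ⟨hpos, hle⟩))
    rw [Real.sign_of_neg (sub_neg.2 hlt)]
    ring
  rw [chebyshevPsi₀, tsum_eq_sum hzero, Chebyshev.psi]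
  refine Finset.sum_le_sum fun n _ ↦
    mul_le_of_le_one_right ArithmeticFunction.vonMangoldt_nonneg ?_
  rcases Real.sign_apply_eq (x - n) with h | h | h <;> rw [h] <;> norm_num

lemma sign_sub_log (l : ℝ) {x : ℝ} (hx : 0 < x) :
    Real.sign (l - Real.log x) = Real.sign (Real.exp l - x) := by
  rcases lt_trichotomy l (Real.log x) with h | rfl | h
  · rw [Real.sign_of_neg (sub_neg.2 h),
      Real.sign_of_neg (sub_neg.2 ((Real.lt_log_iff_exp_lt hx).1 h))]
  · rw [Real.exp_log hx, sub_self, sub_self]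
  · rw [Real.sign_of_pos (sub_pos.2 h),
      Real.sign_of_pos (sub_pos.2 ((Real.log_lt_iff_lt_exp hx).1 h))]

lemma tsum_vonMangoldt_mul_sign (l : ℝ) :
    ∑' n : ℕ, (vonMangoldt n : ℂ) * ((π * (1 + Real.sign (l - Real.log n)) : ℝ) : ℂ) =
      2 * π * chebyshevPsi₀ (Real.exp l) := by
  rw [chebyshevPsi₀, Complex.ofReal_tsum, ← tsum_mul_left]
  refine tsum_congr fun n ↦ ?_
  rcases n.eq_zero_or_pos with rfl | hn
  · simp
  · rw [sign_sub_log l (Nat.cast_pos.2 hn)]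
    push_cast
    ring

lemma tendsto_tsum_zeros_perronIntegral {l : ℝ} (hl : 0 < l) :
    Tendsto (fun T ↦ ∑' ρ : ℂ, (zeroOrder ρ : ℂ) / ρ * perronIntegral l T ρ) atTop
      (𝓝 (2 * π * (Real.exp l - Real.log (2 * π) - chebyshevPsi₀ (Real.exp l) : ℝ))) := by
  have hone := tendsto_perronIntegral hl (a := 1) (by simp)
  have hzero := tendsto_perronIntegral hl (a := 0) (by simp)
  have hlim := (hone.sub (hzero.const_mul (Real.log (2 * π) : ℂ))).sub
    (tendsto_tsum_vonMangoldt_mul_perronIntegral l)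
  rw [tsum_vonMangoldt_mul_sign, mul_one, mul_zero, Complex.exp_zero, mul_one] at hlim
  convert! hlim.congr' ?_ using 2
  · push_cast
    ring
  · filter_upwards [eventually_ge_atTop 0] with T hT
    exact (hasSum_perronIntegral_zeros l hT).tsum_eq.symm

lemma isNontrivialZetaZero_iff {ρ : ℂ} :
    IsNontrivialZetaZero ρ ↔ zeroOrder ρ ≠ 0 ∧ 0 < ρ.re := by
  rw [IsNontrivialZetaZero]
  constructor
  · rintro ⟨hζ, h0, h1⟩
    have hne : ρ ≠ 1 := by
      rintro rfl
      simp at h1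
    exact ⟨zeroOrder_ne_zero_iff.2 (riemannZeta₁_eq_zero_iff.2 ⟨hne, hζ⟩), h0⟩
  · rintro ⟨hρ, h0⟩
    exact ⟨(riemannZeta₁_eq_zero_iff.1 (zeroOrder_ne_zero_iff.1 hρ)).2, h0,
      re_lt_one_of_zeroOrder_ne_zero hρ⟩

lemma norm_le_one_add_abs_im {ρ : ℂ} (hρ : IsNontrivialZetaZero ρ) : ‖ρ‖ ≤ 1 + |ρ.im| := by
  have hnorm := Complex.norm_le_abs_re_add_abs_im ρ
  rw [abs_of_pos hρ.2.1] at hnorm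
  linarith [hρ.2.2]

lemma finite_nontrivialZeros (T : ℝ) : {ρ | IsNontrivialZetaZero ρ ∧ |ρ.im| ≤ T}.Finite := by
  refine (finite_zeros_norm_le (1 + T)).subset fun ρ ⟨hρ, him⟩ ↦
    ⟨zeroOrder_ne_zero_iff.1 (isNontrivialZetaZero_iff.1 hρ).1, ?_⟩
  linarith [norm_le_one_add_abs_im hρ]

lemma norm_zeroOrder_div_mul_le {ρ z : ℂ} {C : ℝ}
    (h : zeroOrder ρ ≠ 0 → ‖z‖ ≤ C / ‖ρ‖ ^ (1 / 2 : ℝ)) :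
    ‖(zeroOrder ρ : ℂ) / ρ * z‖ ≤ C * (zeroOrder ρ / ‖ρ‖ ^ (3 / 2 : ℝ)) := by
  rcases eq_or_ne (zeroOrder ρ) 0 with hρ | hρ
  · simp [hρ]
  have hpos : 0 < ‖ρ‖ := norm_pos_iff.2 (ne_zero_of_zeroOrder_ne_zero hρ)
  rw [norm_mul, norm_div, Complex.norm_natCast, show (3 / 2 : ℝ) = 1 + 1 / 2 by norm_num,
    Real.rpow_add hpos, Real.rpow_one]
  calc (zeroOrder ρ : ℝ) / ‖ρ‖ * ‖z‖ ≤ zeroOrder ρ / ‖ρ‖ * (C / ‖ρ‖ ^ (1 / 2 : ℝ)) := by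
        gcongr
        exact h hρ
    _ = C * (zeroOrder ρ / (‖ρ‖ * ‖ρ‖ ^ (1 / 2 : ℝ))) := by
        field_simp

lemma tendsto_tsum_trivialZeros {l : ℝ} (hl : 0 < l) :
    Tendsto (fun T ↦ ∑' ρ, {ρ : ℂ | ρ.re ≤ 0}.indicator
        (fun ρ ↦ (zeroOrder ρ : ℂ) / ρ * perronIntegral l T ρ) ρ) atTop
      (𝓝 (∑' ρ, {ρ : ℂ | ρ.re ≤ 0}.indicator
        (fun ρ ↦ (zeroOrder ρ : ℂ) / ρ * (2 * π * Complex.exp (l * ρ))) ρ)) := by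
  refine tendsto_tsum_of_dominated_off_finset (summable_zeroOrder_div_rpow.mul_left
    (2 * Real.exp (2 * l) + 2 * Real.exp (2 * l) / l + 2 * π / l)) ∅ (fun ρ ↦ ?_) ?_
  · by_cases hre : ρ.re ≤ 0
    · simpa only [Set.indicator_of_mem (show ρ ∈ {ρ : ℂ | ρ.re ≤ 0} from hre)] using
        (tendsto_perronIntegral hl (by linarith)).const_mul _
    · simpa only [Set.indicator_of_notMem (show ρ ∉ {ρ : ℂ | ρ.re ≤ 0} from hre)] using
        tendsto_const_nhds
  · filter_upwards [eventually_ge_atTop 1] with T hT ρ _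
    rw [Set.indicator_apply]
    split_ifs with hre
    · refine norm_zeroOrder_div_mul_le fun hρ ↦ ?_
      obtain ⟨h0, -⟩ | ⟨him, hre⟩ :=
        mem_strip_or_of_riemannZeta₁_eq_zero (zeroOrder_ne_zero_iff.1 hρ)
      · exact absurd hre (not_le.2 h0)
      · exact norm_perronIntegral_le_div_rpow hl hT him hre
    · rw [norm_zero]
      positivity

lemma tsum_trivialZeros_eq_ofReal (l : ℝ) :
    ∃ r : ℝ, r ≤ 0 ∧ ∑' ρ, {ρ : ℂ | ρ.re ≤ 0}.indicator
      (fun ρ ↦ (zeroOrder ρ : ℂ) / ρ * (2 * π * Complex.exp (l * ρ))) ρ = r := by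
  have hterm (ρ : ℂ) : ∃ r : ℝ, r ≤ 0 ∧ {ρ : ℂ | ρ.re ≤ 0}.indicator
      (fun ρ ↦ (zeroOrder ρ : ℂ) / ρ * (2 * π * Complex.exp (l * ρ))) ρ = r := by
    rw [Set.indicator_apply]
    split_ifs with hre
    · rcases eq_or_ne (zeroOrder ρ) 0 with hρ | hρ
      · exact ⟨0, le_rfl, by simp [hρ]⟩
      obtain ⟨h0, -⟩ | ⟨him, -⟩ :=
        mem_strip_or_of_riemannZeta₁_eq_zero (zeroOrder_ne_zero_iff.1 hρ)
      · exact absurd hre (not_le.2 h0)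
      lift ρ to ℝ using him
      refine ⟨zeroOrder ρ / ρ * (2 * π * Real.exp (l * ρ)), ?_, by push_cast; rfl⟩
      exact mul_nonpos_of_nonpos_of_nonneg
        (div_nonpos_of_nonneg_of_nonpos (Nat.cast_nonneg _) hre) (by positivity)
    · exact ⟨0, le_rfl, by simp⟩
  choose r hr heq using hterm
  exact ⟨∑' ρ, r ρ, tsum_nonpos hr, by rw [Complex.ofReal_tsum]; exact tsum_congr heq⟩

/-- The error committed in replacing the Perron integral of `1 / (s - a)`, truncated at height `T`,
by `2 * π` times the residue at those `a` that lie at height at most `T`. -/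
noncomputable def perronError (l T : ℝ) (a : ℂ) : ℂ :=
  perronIntegral l T a - if |a.im| ≤ T then 2 * π * Complex.exp (l * a) else 0

lemma norm_perronError_le_div {l T : ℝ} (hl : 0 < l) (hT : 0 < T) {a : ℂ} (ha : a.re < 2)
    (hne : |a.im| ≠ T) :
    ‖perronError l T a‖ ≤ 2 * Real.exp (2 * l) / l / |(|a.im|) - T| := by
  convert norm_perronIntegral_sub_le hl hT ha hne using 2
  rw [perronError]
  rcases lt_or_gt_of_ne hne with h | h
  · simp [h, h.le]
  · simp [h.not_ge, h.le.not_gt]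

lemma norm_perronError_le {l T : ℝ} (hl : 0 < l) (hT : 0 < T) {a : ℂ} (ha : a.re ≤ 1) :
    ‖perronError l T a‖ ≤
      4 * π * Real.exp l + 2 * Real.exp (2 * l) / l + 4 * Real.exp (2 * l) := by
  have hres : ‖if |a.im| ≤ T then 2 * π * Complex.exp (l * a) else 0‖ ≤ 2 * π * Real.exp l := by
    split_ifs
    · rw [norm_mul, norm_mul, Complex.norm_exp, Complex.norm_real, Complex.norm_ofNat,
        Real.norm_of_nonneg Real.pi_pos.le, Complex.re_ofReal_mul]
      gcongr
      exact mul_le_of_le_one_right hl.le ha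
    · rw [norm_zero]
      positivity
  rw [perronError]
  linarith [norm_sub_le (perronIntegral l T a)
    (if |a.im| ≤ T then 2 * π * Complex.exp (l * a) else 0), norm_perronIntegral_le hl hT ha]

lemma tendsto_perronError {l : ℝ} (hl : 0 < l) {a : ℂ} (ha : a.re < 2) :
    Tendsto (fun T ↦ perronError l T a) atTop (𝓝 0) := by
  rw [← sub_self (2 * π * Complex.exp (l * a))]
  refine ((tendsto_perronIntegral hl ha).sub_const _).congr' ?_
  filter_upwards [eventually_ge_atTop |a.im|] with T hT
  rw [perronError, if_pos hT]

lemma norm_perronError_le_div_rpow {l T : ℝ} (hl : 0 < l) (hT : 1 ≤ T) {ρ : ℂ}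
    (hρ : IsNontrivialZetaZero ρ) (hfar : √T < |(|ρ.im|) - T|) :
    ‖perronError l T ρ‖ ≤ 4 * Real.exp (2 * l) / l / ‖ρ‖ ^ (1 / 2 : ℝ) := by
  set d := |(|ρ.im|) - T| with hd
  have hd_one : 1 < d := (Real.one_le_sqrt.2 hT).trans_lt hfar
  have hTd : T ≤ d ^ 2 := (Real.sqrt_le_left (by linarith)).1 hfar.le
  have hpos : 0 < ‖ρ‖ := norm_pos_iff.2 fun h ↦ by simpa [h] using hρ.2.1
  have hnorm : √‖ρ‖ ≤ 2 * d := by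
    rw [Real.sqrt_le_left (by linarith)]
    nlinarith [norm_le_one_add_abs_im hρ, le_abs_self (|ρ.im| - T)]
  have hne : |ρ.im| ≠ T := fun h ↦ by
    rw [hd, h, sub_self, abs_zero] at hd_one
    linarith
  rw [← Real.sqrt_eq_rpow]
  refine (norm_perronError_le_div hl (by linarith) (by linarith [hρ.2.2]) hne).trans ?_
  rw [← hd, div_le_div_iff₀ (by linarith) (Real.sqrt_pos.2 hpos)]
  calc 2 * Real.exp (2 * l) / l * √‖ρ‖ ≤ 2 * Real.exp (2 * l) / l * (2 * d) := by gcongr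
    _ = 4 * Real.exp (2 * l) / l * d := by ring

/-- The contribution of a zero of positive real part to the error of the explicit formula truncated
at height `T`. -/
noncomputable def zeroError (l T : ℝ) (ρ : ℂ) : ℂ :=
  {ρ : ℂ | 0 < ρ.re}.indicator (fun ρ ↦ (zeroOrder ρ : ℂ) / ρ * perronError l T ρ) ρ

lemma zeroError_eq_zero {l T : ℝ} {ρ : ℂ} (hρ : ¬ IsNontrivialZetaZero ρ) :
    zeroError l T ρ = 0 := by
  rw [isNontrivialZetaZero_iff, not_and', ne_eq, not_not] at hρ
  refine Set.indicator_apply_eq_zero.2 fun hre ↦ ?_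
  rw [hρ hre, Nat.cast_zero, zero_div, zero_mul]

lemma zeroError_eq {l T : ℝ} {ρ : ℂ} (hρ : IsNontrivialZetaZero ρ) :
    zeroError l T ρ = (zeroOrder ρ : ℂ) / ρ * perronError l T ρ :=
  Set.indicator_of_mem (s := {ρ : ℂ | 0 < ρ.re}) hρ.2.1 _

lemma tendsto_tsum_zeroError_far {l : ℝ} (hl : 0 < l) :
    Tendsto (fun T ↦ ∑' ρ, {ρ : ℂ | √T < |(|ρ.im|) - T|}.indicator (zeroError l T) ρ) atTop
      (𝓝 0) := by
  rw [← tsum_zero (β := ℂ)]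
  refine tendsto_tsum_of_dominated_off_finset
    (summable_zeroOrder_div_rpow.mul_left (4 * Real.exp (2 * l) / l)) ∅ (fun ρ ↦ ?_) ?_
  · refine squeeze_zero_norm (fun T ↦ norm_indicator_le_norm_self _ _) ?_
    rw [← norm_zero (E := ℂ)]
    by_cases hρ : IsNontrivialZetaZero ρ
    · simpa only [zeroError_eq hρ, mul_zero] using
        ((tendsto_perronError hl (hρ.2.2.trans one_lt_two)).const_mul _).norm
    · simpa only [zeroError_eq_zero hρ] using tendsto_const_nhds
  · filter_upwards [eventually_ge_atTop 1] with T hT ρ _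
    rw [Set.indicator_apply]
    by_cases hρ : IsNontrivialZetaZero ρ
    · split_ifs with hfar
      · rw [zeroError_eq hρ]
        exact norm_zeroOrder_div_mul_le fun _ ↦ norm_perronError_le_div_rpow hl hT hρ hfar
      · rw [norm_zero]
        positivity
    · rw [zeroError_eq_zero hρ, ite_self, norm_zero]
      positivity

lemma two_mul_sqrt_le {T : ℝ} (hT : 4 ≤ T) : 2 * √T ≤ T := by
  have htwo : 2 ≤ √T := Real.le_sqrt_of_sq_le (by linarith)
  nlinarith [Real.mul_self_sqrt (show 0 ≤ T by linarith)]

lemma sum_zeroOrder_near_le {T : ℝ} (hT : 4 ≤ T) {S : Finset ℂ}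
    (hS : ∀ ρ ∈ S, IsNontrivialZetaZero ρ ∧ |(|ρ.im|) - T| ≤ √T) :
    (∑ ρ ∈ S, zeroOrder ρ : ℝ) ≤ 576 * (√T * Real.log (4 * T)) := by
  have hsqrt := two_mul_sqrt_le hT
  have htwo : 2 ≤ √T := Real.le_sqrt_of_sq_le (by linarith)
  set J := Finset.Icc ⌊T - √T⌋₊ ⌊T + √T⌋₊
  have hmaps : ∀ ρ ∈ S, ⌊|ρ.im|⌋₊ ∈ J := fun ρ hρ ↦ by
    obtain ⟨hlow, hupp⟩ := abs_le.1 (hS ρ hρ).2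
    exact Finset.mem_Icc.2
      ⟨Nat.floor_le_floor (by linarith), Nat.floor_le_floor (by linarith)⟩
  have hfiber : ∀ k ∈ J, (∑ ρ ∈ S with ⌊|ρ.im|⌋₊ = k, zeroOrder ρ : ℝ) ≤
      144 * Real.log (4 * T) := fun k hk ↦ by
    have hkT : (k : ℝ) ≤ T + √T :=
      (Nat.cast_le.2 (Finset.mem_Icc.1 hk).2).trans (Nat.floor_le (by linarith))
    refine (sum_zeroOrder_le_of_abs_abs_im_sub_le (t := k + 1 / 2) fun ρ hρ ↦ ?_).trans ?_
    · obtain ⟨hmem, hfloor⟩ := Finset.mem_filter.1 hρ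
      have hlow := Nat.floor_le (abs_nonneg ρ.im)
      have hupp := Nat.lt_floor_add_one |ρ.im|
      rw [hfloor] at hlow hupp
      exact ⟨(hS ρ hmem).1.2.1, (hS ρ hmem).1.2.2, abs_le.2 ⟨by linarith, by linarith⟩⟩
    · rw [abs_of_nonneg (by positivity)]
      gcongr
      linarith
  have hcard : (J.card : ℝ) ≤ 4 * √T := by
    have hupp := Nat.floor_le (show 0 ≤ T + √T by linarith)
    have hlow := Nat.lt_floor_add_one (T - √T)
    have hle : ⌊T - √T⌋₊ ≤ ⌊T + √T⌋₊ + 1 :=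
      (Nat.floor_le_floor (by linarith)).trans (Nat.le_succ _)
    rw [Nat.card_Icc, Nat.cast_sub hle, Nat.cast_succ]
    linarith
  calc (∑ ρ ∈ S, zeroOrder ρ : ℝ) = ∑ k ∈ J, ∑ ρ ∈ S with ⌊|ρ.im|⌋₊ = k, (zeroOrder ρ : ℝ) :=
        (Finset.sum_fiberwise_of_maps_to hmaps _).symm
    _ ≤ J.card • (144 * Real.log (4 * T)) := Finset.sum_le_card_nsmul _ _ _ hfiber
    _ ≤ 4 * √T * (144 * Real.log (4 * T)) := by
        rw [nsmul_eq_mul]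
        have := Real.log_nonneg (show 1 ≤ 4 * T by linarith)
        gcongr
    _ = 576 * (√T * Real.log (4 * T)) := by ring

lemma norm_zeroError_near_le {l T : ℝ} (hl : 0 < l) (hT : 4 ≤ T) {ρ : ℂ}
    (hρ : IsNontrivialZetaZero ρ) (hnear : |(|ρ.im|) - T| ≤ √T) :
    ‖zeroError l T ρ‖ ≤ zeroOrder ρ *
      ((4 * π * Real.exp l + 2 * Real.exp (2 * l) / l + 4 * Real.exp (2 * l)) / (T / 2)) := by
  have hnorm : T / 2 ≤ ‖ρ‖ := by
    linarith [(abs_le.1 hnear).1, two_mul_sqrt_le hT, Complex.abs_im_le_norm ρ]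
  rw [zeroError_eq hρ, norm_mul, norm_div, Complex.norm_natCast, div_mul_eq_mul_div, mul_div_assoc]
  gcongr
  exact norm_perronError_le hl (by linarith) hρ.2.2.le

lemma norm_tsum_zeroError_near_le {l T : ℝ} (hl : 0 < l) (hT : 4 ≤ T) :
    ‖∑' ρ, {ρ : ℂ | √T < |(|ρ.im|) - T|}ᶜ.indicator (zeroError l T) ρ‖ ≤
      1152 * (4 * π * Real.exp l + 2 * Real.exp (2 * l) / l + 4 * Real.exp (2 * l)) *
        (Real.log (4 * T) / √T) := by
  set K := 4 * π * Real.exp l + 2 * Real.exp (2 * l) / l + 4 * Real.exp (2 * l)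
  have : 0 ≤ K := by positivity
  have hfin : {ρ | IsNontrivialZetaZero ρ ∧ |(|ρ.im|) - T| ≤ √T}.Finite :=
    (finite_nontrivialZeros (T + √T)).subset fun ρ ⟨hρ, hnear⟩ ↦
      ⟨hρ, by linarith [(abs_le.1 hnear).2]⟩
  have hzero (ρ : ℂ) (hρ : ρ ∉ hfin.toFinset) :
      {ρ : ℂ | √T < |(|ρ.im|) - T|}ᶜ.indicator (zeroError l T) ρ = 0 :=
    Set.indicator_apply_eq_zero.2 fun hnear ↦ zeroError_eq_zero fun hzero ↦
      hρ (hfin.mem_toFinset.2 ⟨hzero, not_lt.1 hnear⟩)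
  rw [tsum_eq_sum hzero]
  calc ‖∑ ρ ∈ hfin.toFinset, {ρ : ℂ | √T < |(|ρ.im|) - T|}ᶜ.indicator (zeroError l T) ρ‖
      ≤ ∑ ρ ∈ hfin.toFinset, zeroOrder ρ * (K / (T / 2)) :=
        norm_sum_le_of_le _ fun ρ hρ ↦ (norm_indicator_le_norm_self _ _).trans <|
          have ⟨hzero, hnear⟩ := hfin.mem_toFinset.1 hρ
          norm_zeroError_near_le hl hT hzero hnear
    _ ≤ 576 * (√T * Real.log (4 * T)) * (K / (T / 2)) := by
        rw [← Finset.sum_mul]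
        gcongr
        exact sum_zeroOrder_near_le hT fun ρ hρ ↦ hfin.mem_toFinset.1 hρ
    _ = 1152 * K * (Real.log (4 * T) * (√T / T)) := by ring
    _ = 1152 * K * (Real.log (4 * T) / √T) := by
        rw [Real.sqrt_div_self, div_eq_mul_inv]

lemma tendsto_log_four_mul_div_sqrt :
    Tendsto (fun T : ℝ ↦ Real.log (4 * T) / √T) atTop (𝓝 0) := by
  have hlog : Tendsto (fun T : ℝ ↦ Real.log T / √T) atTop (𝓝 0) := by
    simpa only [Real.sqrt_eq_rpow] using
      (isLittleO_log_rpow_atTop one_half_pos).tendsto_div_nhds_zero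
  have hconst : Tendsto (fun T : ℝ ↦ Real.log 4 / √T) atTop (𝓝 0) :=
    tendsto_const_nhds.div_atTop Real.tendsto_sqrt_atTop
  rw [← add_zero 0]
  refine (hconst.add hlog).congr' ?_
  filter_upwards [eventually_gt_atTop 0] with T hT
  rw [Real.log_mul four_ne_zero hT.ne', add_div]

lemma tendsto_tsum_zeroError_near {l : ℝ} (hl : 0 < l) :
    Tendsto (fun T ↦ ∑' ρ, {ρ : ℂ | √T < |(|ρ.im|) - T|}ᶜ.indicator (zeroError l T) ρ) atTop
      (𝓝 0) := by
  have hbound := tendsto_log_four_mul_div_sqrt.const_mul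
    (1152 * (4 * π * Real.exp l + 2 * Real.exp (2 * l) / l + 4 * Real.exp (2 * l)))
  rw [mul_zero] at hbound
  refine squeeze_zero_norm' ?_ hbound
  filter_upwards [eventually_ge_atTop 4] with T hT using norm_tsum_zeroError_near_le hl hT

lemma hasSum_nontrivialZeros (T : ℝ) (f : ℂ → ℂ) :
    HasSum ({ρ | IsNontrivialZetaZero ρ ∧ |ρ.im| ≤ T}.indicator f)
      (∑ᶠ ρ ∈ {ρ | IsNontrivialZetaZero ρ ∧ |ρ.im| ≤ T}, f ρ) := by
  have hfin := (finite_nontrivialZeros T).subset (Set.support_indicator_subset (f := f))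
  rw [finsum_mem_def, ← tsum_eq_finsum (L := .unconditional ℂ) hfin]
  exact (summable_of_hasFiniteSupport hfin).hasSum

lemma zeroOrder_div_mul_perronIntegral_eq (l T : ℝ) (ρ : ℂ) :
    (zeroOrder ρ : ℂ) / ρ * perronIntegral l T ρ =
      {ρ : ℂ | ρ.re ≤ 0}.indicator (fun ρ ↦ (zeroOrder ρ : ℂ) / ρ * perronIntegral l T ρ) ρ +
      {ρ | IsNontrivialZetaZero ρ ∧ |ρ.im| ≤ T}.indicator
        (fun ρ ↦ (zeroOrder ρ : ℂ) / ρ * (2 * π * Complex.exp (l * ρ))) ρ + zeroError l T ρ := by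
  rcases eq_or_ne (zeroOrder ρ) 0 with hρ | hρ
  · simp [zeroError, Set.indicator_apply, isNontrivialZetaZero_iff, hρ]
  rcases le_or_gt ρ.re 0 with hre | hre
  · simp [zeroError, isNontrivialZetaZero_iff, hre, hre.not_gt]
  · by_cases him : |ρ.im| ≤ T <;>
      simp [zeroError, perronError, isNontrivialZetaZero_iff, hre, hre.not_ge, hρ, him, mul_sub]

lemma tendsto_finsum_nontrivialZeros {l : ℝ} (hl : 0 < l) :
    Tendsto (fun T ↦ ∑ᶠ ρ ∈ {ρ | IsNontrivialZetaZero ρ ∧ |ρ.im| ≤ T},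
        (zeroOrder ρ : ℂ) / ρ * (2 * π * Complex.exp (l * ρ))) atTop
      (𝓝 (2 * π * (Real.exp l - Real.log (2 * π) - chebyshevPsi₀ (Real.exp l) : ℝ) -
        ∑' ρ, {ρ : ℂ | ρ.re ≤ 0}.indicator
          (fun ρ ↦ (zeroOrder ρ : ℂ) / ρ * (2 * π * Complex.exp (l * ρ))) ρ)) := by
  have hlim := (((tendsto_tsum_zeros_perronIntegral hl).sub (tendsto_tsum_trivialZeros hl)).sub
    (tendsto_tsum_zeroError_far hl)).sub (tendsto_tsum_zeroError_near hl)
  rw [sub_zero, sub_zero] at hlim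
  refine hlim.congr' ?_
  filter_upwards [eventually_ge_atTop 0] with T hT
  have hall := (hasSum_perronIntegral_zeros l hT).summable
  have htriv := hall.indicator {ρ : ℂ | ρ.re ≤ 0}
  have hmain := hasSum_nontrivialZeros T
    fun ρ ↦ (zeroOrder ρ : ℂ) / ρ * (2 * π * Complex.exp (l * ρ))
  have herror : Summable (zeroError l T) := by
    refine (hall.sub (htriv.add hmain.summable)).congr fun ρ ↦ ?_
    rw [zeroOrder_div_mul_perronIntegral_eq]
    exact add_sub_cancel_left _ _
  have hsplit : ∑' ρ, {ρ : ℂ | √T < |(|ρ.im|) - T|}.indicator (zeroError l T) ρ +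
      ∑' ρ, {ρ : ℂ | √T < |(|ρ.im|) - T|}ᶜ.indicator (zeroError l T) ρ =
        ∑' ρ, zeroError l T ρ := by
    rw [← (herror.indicator _).tsum_add (herror.indicator _)]
    exact tsum_congr fun ρ ↦ congrFun (Set.indicator_self_add_compl _ _) ρ
  rw [tsum_congr (zeroOrder_div_mul_perronIntegral_eq l T),
    (htriv.add hmain.summable).tsum_add herror, htriv.tsum_add hmain.summable, hmain.tsum_eq,
    add_assoc, add_sub_cancel_left, sub_sub, hsplit]
  exact add_sub_cancel_right _ _

lemma tendsto_finsum_cpow_div {x : ℝ} (hx : 1 < x) :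
    ∃ L : ℝ, Tendsto (fun T : ℝ ↦ ∑ᶠ ρ ∈ {ρ : ℂ | IsNontrivialZetaZero ρ ∧ |ρ.im| ≤ T},
        (zetaZeroMultiplicity ρ : ℂ) * ((x : ℂ) ^ ρ / ρ)) atTop (𝓝 (L : ℂ)) ∧
      x - Real.log (2 * π) - Chebyshev.psi x ≤ L := by
  have hx0 : 0 < x := by linarith
  obtain ⟨r, hr, hsum⟩ := tsum_trivialZeros_eq_ofReal (Real.log x)
  have hlim := (tendsto_finsum_nontrivialZeros (Real.log_pos hx)).const_mul (2 * π : ℂ)⁻¹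
  rw [hsum, Real.exp_log hx0] at hlim
  refine ⟨x - Real.log (2 * π) - chebyshevPsi₀ x - r / (2 * π), ?_, ?_⟩
  · convert! hlim using 2 with T
    · rw [mul_finsum_mem]
      refine finsum_mem_congr rfl fun ρ hρ ↦ ?_
      have hne : ρ ≠ 1 := by
        rintro rfl
        simpa using hρ.1.2.2
      rw [zetaZeroMultiplicity_eq_zeroOrder hne,
        Complex.cpow_def_of_ne_zero (Complex.ofReal_ne_zero.2 hx0.ne'), Complex.ofReal_log hx0.le]
      field_simp
    · push_cast
      field_simp
  · linarith [chebyshevPsi₀_le_psi hx0.le,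
      div_nonpos_of_nonpos_of_nonneg hr (show 0 ≤ 2 * π by positivity)]

/-! ### Prime powers -/

lemma four_pow_mul_factorial_sq_le (n : ℕ) (hn : 1 ≤ n) :
    (4 ^ n * n.factorial ^ 2 : ℝ) ≤ 4 * n * (∏ k ∈ Finset.range n, (2 * k + 1 : ℝ)) ^ 2 := by
  induction n, hn using Nat.le_induction with
  | base => norm_num
  | succ n hn ih =>
    rw [Finset.prod_range_succ, Nat.factorial_succ]
    push_cast
    set P := ∏ k ∈ Finset.range n, (2 * k + 1 : ℝ)
    calc 4 ^ (n + 1) * (((n : ℝ) + 1) * n.factorial) ^ 2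
        = 4 * (n + 1) ^ 2 * (4 ^ n * n.factorial ^ 2) := by ring
      _ ≤ 4 * (n + 1) ^ 2 * (4 * n * P ^ 2) := by gcongr
      _ = 4 * (n + 1) * P ^ 2 * (4 * n * (n + 1)) := by ring
      _ ≤ 4 * (n + 1) * P ^ 2 * (2 * n + 1) ^ 2 := by
        gcongr
        nlinarith
      _ = 4 * (n + 1) * (P * (2 * n + 1)) ^ 2 := by ring

lemma two_mul_div_exp_one_pow_le_prod_odd (n : ℕ) :
    (2 * n / Real.exp 1) ^ n ≤ ∏ k ∈ Finset.range n, (2 * k + 1 : ℝ) := by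
  rcases n.eq_zero_or_pos with rfl | hn
  · simp
  have hprod : 0 ≤ ∏ k ∈ Finset.range n, (2 * k + 1 : ℝ) :=
    Finset.prod_nonneg fun k _ ↦ by positivity
  have hstirling : 2 * π * n * ((n / Real.exp 1) ^ n) ^ 2 ≤ (n.factorial : ℝ) ^ 2 := by
    refine le_of_eq_of_le ?_ (pow_le_pow_left₀ (by positivity) (Stirling.le_factorial_stirling n) 2)
    rw [mul_pow, Real.sq_sqrt (by positivity)]
  have : (0 : ℝ) < n := Nat.cast_pos.2 hn
  refine le_of_sq_le_sq ?_ hprod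
  refine le_of_mul_le_mul_left ?_ (show (0 : ℝ) < 4 * n by positivity)
  calc 4 * n * ((2 * n / Real.exp 1) ^ n) ^ 2
      = 4 * n * (4 ^ n * ((n / Real.exp 1) ^ n) ^ 2) := by
        rw [mul_div_assoc, mul_pow, mul_pow, ← pow_mul, mul_comm n 2, pow_mul]
        norm_num
    _ ≤ 4 ^ n * (2 * π * n * ((n / Real.exp 1) ^ n) ^ 2) := by
        nlinarith [Real.pi_gt_three,
          show (0 : ℝ) ≤ 4 ^ n * (n * ((n / Real.exp 1) ^ n) ^ 2) by positivity]
    _ ≤ 4 ^ n * (n.factorial : ℝ) ^ 2 := by gcongr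
    _ ≤ 4 * n * (∏ k ∈ Finset.range n, (2 * k + 1 : ℝ)) ^ 2 := four_pow_mul_factorial_sq_le n hn

lemma sum_log_div_odd_le {y : ℝ} (hy : 0 < y) (n : ℕ) :
    ∑ k ∈ Finset.range n, Real.log (y / (2 * k + 1)) ≤ y / 2 := by
  rcases n.eq_zero_or_pos with rfl | hn
  · rw [Finset.range_zero, Finset.sum_empty]
    positivity
  have : (0 : ℝ) < n := Nat.cast_pos.2 hn
  have hprod := Real.log_le_log (by positivity) (two_mul_div_exp_one_pow_le_prod_odd n)
  rw [Real.log_pow, Real.log_div (by positivity) (Real.exp_pos 1).ne', Real.log_exp,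
    Real.log_prod fun k _ ↦ by positivity] at hprod
  have hlog : Real.log (y / (2 * n)) ≤ y / (2 * n) - 1 :=
    Real.log_le_sub_one_of_pos (by positivity)
  rw [Real.log_div hy.ne' (by positivity)] at hlog
  calc ∑ k ∈ Finset.range n, Real.log (y / (2 * k + 1))
      = n * Real.log y - ∑ k ∈ Finset.range n, Real.log (2 * k + 1) := by
        rw [← nsmul_eq_mul, ← Finset.card_range n, ← Finset.sum_const, Finset.card_range,
          ← Finset.sum_sub_distrib]
        exact Finset.sum_congr rfl fun k _ ↦ Real.log_div hy.ne' (by positivity)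
    _ ≤ n * Real.log y - n * (Real.log (2 * n) - 1) := by gcongr
    _ = n * (Real.log y - Real.log (2 * n) + 1) := by ring
    _ ≤ n * (y / (2 * n) - 1 + 1) := by gcongr
    _ = y / 2 := by
        field_simp
        ring

lemma sum_log_div_prime_le {y : ℝ} (hy : 0 < y) :
    ∑ p ∈ Nat.primesLE ⌊y⌋₊, Real.log (y / p) ≤ y / 2 := by
  set P := Nat.primesLE ⌊y⌋₊
  have hP (p : ℕ) (hp : p ∈ P) : p ≤ ⌊y⌋₊ ∧ p.Prime := Nat.mem_primesLE.1 hp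
  have hinj : Set.InjOn (fun p : ℕ ↦ (p - 1) / 2) P := by
    intro p hp q hq hpq
    have hp' := (hP p hp).2
    have hq' := (hP q hq).2
    have := hp'.two_le
    have := hq'.two_le
    rcases hp'.eq_two_or_odd with hp2 | hp2 <;> rcases hq'.eq_two_or_odd with hq2 | hq2 <;>
      dsimp only at hpq <;> lia
  have hodd (p : ℕ) (hp : p ∈ P) : 2 * ((p - 1) / 2) + 1 ≤ p := by
    have := (hP p hp).2.pos
    lia
  calc ∑ p ∈ P, Real.log (y / p)
      ≤ ∑ p ∈ P, Real.log (y / (2 * ((p - 1) / 2 : ℕ) + 1)) := by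
        refine Finset.sum_le_sum fun p hp ↦ ?_
        have : (0 : ℝ) < p := Nat.cast_pos.2 (hP p hp).2.pos
        gcongr
        exact_mod_cast hodd p hp
    _ = ∑ k ∈ P.image (fun p : ℕ ↦ (p - 1) / 2), Real.log (y / (2 * (k : ℝ) + 1)) :=
        (Finset.sum_image (f := fun k : ℕ ↦ Real.log (y / (2 * (k : ℝ) + 1))) hinj).symm
    _ ≤ ∑ k ∈ Finset.range ((⌊y⌋₊ + 1) / 2), Real.log (y / (2 * k + 1)) := by
        refine Finset.sum_le_sum_of_subset_of_nonneg ?_ fun k hk _ ↦ Real.log_nonneg ?_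
        · refine Finset.image_subset_iff.2 fun p hp ↦ Finset.mem_range.2 ?_
          have := (hP p hp).2.two_le
          have := (hP p hp).1
          lia
        · have hk : 2 * k + 1 ≤ ⌊y⌋₊ := by
            have := Finset.mem_range.1 hk
            lia
          rw [one_le_div (by positivity)]
          exact_mod_cast (Nat.le_floor_iff hy.le).1 hk
    _ ≤ y / 2 := sum_log_div_odd_le hy _

lemma le_floor_rpow_one_div_iff {x : ℝ} (hx : 0 ≤ x) {k : ℕ} (hk : k ≠ 0) (m : ℕ) :
    m ≤ ⌊x ^ (1 / k : ℝ)⌋₊ ↔ m ^ k ≤ ⌊x⌋₊ := by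
  rw [Nat.le_floor_iff (by positivity), Nat.le_floor_iff hx, one_div,
    Real.le_rpow_inv_iff_of_pos (by positivity) hx (by positivity), Real.rpow_natCast,
    Nat.cast_pow]

lemma primesLE_floor_rpow_one_div {x : ℝ} (hx : 0 ≤ x) {k : ℕ} (hk : k ≠ 0) :
    Nat.primesLE ⌊x ^ (1 / k : ℝ)⌋₊ = {p ∈ Nat.primesLE ⌊x⌋₊ | p ^ k ≤ ⌊x⌋₊} := by
  ext p
  rw [Finset.mem_filter, Nat.mem_primesLE, Nat.mem_primesLE, le_floor_rpow_one_div_iff hx hk]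
  exact ⟨fun h ↦ ⟨⟨(Nat.le_self_pow hk p).trans h.1, h.2⟩, h.1⟩, fun h ↦ ⟨h.2, h.1.2⟩⟩

lemma log_mul_log_le {x : ℝ} (hx : 1 ≤ x) {p : ℕ} (hp : p.Prime) :
    Nat.log p ⌊x⌋₊ * Real.log p ≤ Real.log p + (if p ^ 2 ≤ ⌊x⌋₊ then Real.log p else 0) +
      if p ^ 3 ≤ ⌊x⌋₊ then Real.log x - 2 * Real.log p else 0 := by
  have hlog : 0 ≤ Real.log p := Real.log_natCast_nonneg p
  have hn : ⌊x⌋₊ ≠ 0 := (Nat.floor_pos.2 hx).ne'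
  have hlt {k : ℕ} (hk : ¬ p ^ k ≤ ⌊x⌋₊) : Nat.log p ⌊x⌋₊ < k := Nat.log_lt_of_lt_pow hn (by lia)
  split_ifs with h2 h3 h3
  · rw [← Real.log_pow]
    have hpow : ((p ^ Nat.log p ⌊x⌋₊ : ℕ) : ℝ) ≤ x :=
      (Nat.le_floor_iff (by positivity)).1 (Nat.pow_log_le_self p hn)
    have := Real.log_le_log (Nat.cast_pos.2 (by have := hp.pos; positivity)) hpow
    push_cast at this
    linarith
  · have : (Nat.log p ⌊x⌋₊ : ℝ) ≤ 2 := by exact_mod_cast Nat.lt_succ_iff.1 (hlt h3)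
    nlinarith
  · exact absurd ((Nat.pow_le_pow_right hp.pos (by norm_num)).trans h3) h2
  · have : (Nat.log p ⌊x⌋₊ : ℝ) ≤ 1 := by exact_mod_cast Nat.lt_succ_iff.1 (hlt h2)
    nlinarith

lemma psi_sub_theta_sub_theta_sqrt_le {x : ℝ} (hx : 1 ≤ x) :
    Chebyshev.psi x - Chebyshev.theta x - Chebyshev.theta (x ^ (1 / 2 : ℝ)) ≤
      ∑ p ∈ Nat.primesLE ⌊x ^ (1 / 3 : ℝ)⌋₊, (Real.log x - 2 * Real.log p) := by
  have hroot (k : ℕ) (hk : k ≠ 0) := primesLE_floor_rpow_one_div (zero_le_one.trans hx) hk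
  have hsqrt := hroot 2 two_ne_zero
  have hcbrt := hroot 3 three_ne_zero
  push_cast at hsqrt hcbrt
  rw [Chebyshev.psi_eq_psi_coe_floor, Chebyshev.psi_eq_sum_mul_log_prime,
    Chebyshev.theta_eq_sum_primesLE x, Chebyshev.theta_eq_sum_primesLE (x ^ (1 / 2 : ℝ)), hsqrt,
    hcbrt, Finset.sum_filter, Finset.sum_filter, sub_sub, sub_le_iff_le_add',
    ← Finset.sum_add_distrib, ← Finset.sum_add_distrib]
  exact Finset.sum_le_sum fun p hp ↦ log_mul_log_le hx (Nat.mem_primesLE.1 hp).2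

lemma psi_sub_theta_sub_theta_sqrt_lt {x : ℝ} (hx : 1 ≤ x) :
    Chebyshev.psi x - Chebyshev.theta x - Chebyshev.theta (x ^ (1 / 2 : ℝ)) <
      3 * x ^ (1 / 3 : ℝ) := by
  have hx0 : 0 < x := by positivity
  set y := x ^ (1 / 3 : ℝ) with hy
  have hy0 : 0 < y := by positivity
  have hlog : Real.log x = 3 * Real.log y := by
    rw [hy, Real.log_rpow hx0]
    ring
  have hlog4 : Real.log 4 < 3 / 2 := by
    rw [show (4 : ℝ) = 2 ^ 2 by norm_num, Real.log_pow]
    linarith [Real.log_two_lt_d9]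
  calc Chebyshev.psi x - Chebyshev.theta x - Chebyshev.theta (x ^ (1 / 2 : ℝ))
      ≤ ∑ p ∈ Nat.primesLE ⌊y⌋₊, (Real.log x - 2 * Real.log p) :=
        psi_sub_theta_sub_theta_sqrt_le hx
    _ = ∑ p ∈ Nat.primesLE ⌊y⌋₊, (Real.log p + 3 * Real.log (y / p)) := by
        refine Finset.sum_congr rfl fun p hp ↦ ?_
        have hp0 : (p : ℝ) ≠ 0 := Nat.cast_ne_zero.2 (Nat.mem_primesLE.1 hp).2.ne_zero
        rw [Real.log_div hy0.ne' hp0, hlog]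
        ring
    _ = Chebyshev.theta y + 3 * ∑ p ∈ Nat.primesLE ⌊y⌋₊, Real.log (y / p) := by
        rw [Finset.sum_add_distrib, ← Finset.mul_sum, Chebyshev.theta_eq_sum_primesLE]
    _ ≤ Real.log 4 * y + 3 * (y / 2) := by
        gcongr
        · exact Chebyshev.theta_le_log4_mul_x hy0.le
        · exact sum_log_div_prime_le hy0
    _ < 3 * y := by nlinarith

lemma chebyshevTheta_eq (x : ℝ) : chebyshevTheta x = Chebyshev.theta x := by
  rw [Chebyshev.theta_eq_sum_Icc, chebyshevTheta, Nat.range_succ_eq_Icc_zero]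

end ExplicitFormula

theorem theta_explicit_lower_bound (x : ℝ) (hx : 1 < x) :
    ∃ L : ℝ,
      Tendsto
        (fun T : ℝ =>
          ∑ᶠ ρ ∈ {ρ : ℂ | IsNontrivialZetaZero ρ ∧ |ρ.im| ≤ T},
            (zetaZeroMultiplicity ρ : ℂ) * ((x : ℂ) ^ ρ / ρ))
        atTop (nhds (L : ℂ)) ∧
      chebyshevTheta x - x >
        -chebyshevTheta (x ^ ((1 : ℝ) / 2)) - L - Real.log (2 * π) -
          3 * x ^ ((1 : ℝ) / 3) := by
  obtain ⟨L, hL, hle⟩ := ExplicitFormula.tendsto_finsum_cpow_div hx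
  refine ⟨L, hL, ?_⟩
  rw [ExplicitFormula.chebyshevTheta_eq, ExplicitFormula.chebyshevTheta_eq]
  linarith [ExplicitFormula.psi_sub_theta_sub_theta_sqrt_lt hx.le]
end
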